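/- (Generic corollary of the main theorem.) Consider the system ẋ = f(x) + g₁(x)u₁ + g₂(x)u₂ on an open set U ⊆ ℝⁿ, n ≥ 2, with f, g₁, g₂ smooth. Let (G_k) be the derived flag of Δ = span_{C^∞(U)}{g₁, g₂}, let Λᵏ = (G_k)^⊥ and Cᵏ_q = C(Λᵏ)_q for 1 ≤ k ≤ n−3. Suppose there exists an open dense set D ⊆ U such that: (1) dim G_k(q) = 2 + k for all 0 ≤ k ≤ n−2 and all q ∈ D; and (2) (L_f ω)(q) ∈ Cᵏ_q for all 1 ≤ k ≤ n−3, all q ∈ D and all ω ∈ Λᵏ. Then there exists an open dense set V ⊆ U such that for every p ∈ V there exist an open neighborhood W ⊆ U of p, a diffeomorphism φ : W → φ(W) ⊆ ℝⁿ, smooth α : W → ℝ², β : W → ℝ^{2×2} with β(x) invertible on W, and smooth functions φ₁, …, φ_{n−2} with φᵢ depending only on z₁, …, z_{i+1}, zₙ, such that for all x ∈ W, v ∈ ℝ²: Dφ(x)( f(x) + Σᵢ(αᵢ(x) + Σⱼ β_{ij}(x)vⱼ) gᵢ(x) ) = ( φ₁(z) + z₂v₁, …, φ_{n−2}(z) +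 z_{n−1}v₁, v₂, v₁ ) with z = φ(x). -/

import Mathlib

noncomputable section

/-- A vector field on (an open subset of) `ℝⁿ`, represented as a total map. -/
abbrev VF (n : ℕ) := (Fin n → ℝ) → (Fin n → ℝ)

/-- Lie bracket `[X,Y](x) = DY(x)(X(x)) − DX(x)(Y(x))`. -/
def lieBracket {n : ℕ} (X Y : VF n) : VF n :=
  fun x => fderiv ℝ Y x (X x) - fderiv ℝ X x (Y x)

/-- Span over `C^∞(U)` of a set of vector fields (membership only constrains values on `U`). -/
def spanOn {n : ℕ} (U : Set (Fin n → ℝ)) (S : Set (VF n)) : Set (VF n) :=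
  { X | ∃ (m : ℕ) (c : Fin m → (Fin n → ℝ) → ℝ) (Y : Fin m → VF n),
      (∀ i, ContDiffOn ℝ (⊤ : ℕ∞) (c i) U) ∧ (∀ i, Y i ∈ S) ∧
      ∀ x ∈ U, X x = ∑ i, c i x • Y i x }

/-- Sum of two distributions (as equality of values on `U`). -/
def addOn {n : ℕ} (U : Set (Fin n → ℝ)) (A B : Set (VF n)) : Set (VF n) :=
  { X | ∃ Y ∈ A, ∃ Z ∈ B, ∀ x ∈ U, X x = Y x + Z x }

/-- The set of brackets `[X,Y]`, `X ∈ A`, `Y ∈ B`. -/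
def bracketSet {n : ℕ} (A B : Set (VF n)) : Set (VF n) :=
  { Z | ∃ X ∈ A, ∃ Y ∈ B, Z = lieBracket X Y }

/-- The Lie flag: `F₀ = Δ`, `F_{k+1} = F_k + span_{C^∞(U)}{[X,Y] : X ∈ F_k, Y ∈ F₀}`. -/
def lieFlag {n : ℕ} (U : Set (Fin n → ℝ)) (Δ : Set (VF n)) : ℕ → Set (VF n)
  | 0 => Δ
  | k + 1 => addOn U (lieFlag U Δ k) (spanOn U (bracketSet (lieFlag U Δ k) Δ))

/-- The derived flag: `G₀ = Δ`, `G_{k+1} = G_k + span_{C^∞(U)}{[X,Y] : X, Y ∈ G_k}`. -/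
def derivedFlag {n : ℕ} (U : Set (Fin n → ℝ)) (Δ : Set (VF n)) : ℕ → Set (VF n)
  | 0 => Δ
  | k + 1 => addOn U (derivedFlag U Δ k)
      (spanOn U (bracketSet (derivedFlag U Δ k) (derivedFlag U Δ k)))

end

noncomputable section

/-- Covectors on `ℝⁿ`. -/
abbrev Covector (n : ℕ) := (Fin n → ℝ) →L[ℝ] ℝ

/-- A 1-form on (an open subset of) `ℝⁿ`, represented as a total map. -/
abbrev OneForm (n : ℕ) := (Fin n → ℝ) → Covector n

/-- The interior product `ι_v dω(q)`, i.e. the covector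
`w ↦ dω(q)(v,w) = (Dω(q)(v))(w) − (Dω(q)(w))(v)`. -/
def intExtDer {n : ℕ} (ω : OneForm n) (q v : Fin n → ℝ) : Covector n :=
  fderiv ℝ ω q v - (fderiv ℝ ω q).flip v

/-- The Lie derivative of a 1-form along a vector field:
`(L_X ω)(q)(v) = (Dω(q)(X(q)))(v) + ω(q)(DX(q)(v))`. -/
def lieDerOneForm {n : ℕ} (X : VF n) (ω : OneForm n) (q : Fin n → ℝ) : Covector n :=
  fderiv ℝ ω q (X q) + (ω q).comp (fderiv ℝ X q)

/-- The annihilator `A^⊥` of a set `A` of vector fields: the smooth 1-forms `ω` on `U`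
with `ω(x)(X(x)) = 0` for all `X ∈ A`, `x ∈ U`. -/
def annihilatorOn {n : ℕ} (U : Set (Fin n → ℝ)) (A : Set (VF n)) : Set (OneForm n) :=
  { ω | ContDiffOn ℝ (⊤ : ℕ∞) ω U ∧ ∀ X ∈ A, ∀ x ∈ U, ω x (X x) = 0 }

/-- The associated (Cauchy characteristic) space of a codistribution `Λ` at `q`. -/
def assocOf {n : ℕ} (Λ : Set (OneForm n)) (q : Fin n → ℝ) : Set (Fin n → ℝ) :=
  { v | ∀ ω ∈ Λ, ω q v = 0 ∧
      intExtDer ω q v ∈ Submodule.span ℝ { ξ : Covector n | ∃ ρ ∈ Λ, ξ = ρ q } }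

/-- The retracting space `C(Λ)_q`, the annihilator of the associated space. -/
def retractOf {n : ℕ} (Λ : Set (OneForm n)) (q : Fin n → ℝ) : Set (Covector n) :=
  { ξ | ∀ v ∈ assocOf Λ q, ξ v = 0 }

/-- `dim Δ(q)`: the dimension of `Δ_q = {X(q) : X ∈ Δ} ⊆ ℝⁿ`. -/
def evalDim {n : ℕ} (A : Set (VF n)) (q : Fin n → ℝ) : ℕ :=
  Module.finrank ℝ ↥(Submodule.span ℝ { w : Fin n → ℝ | ∃ X ∈ A, w = X q })

/-- The right-hand side of the triangular form (3), with 0-based components: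
component `j ≤ n−3` is `φ_{j+1}(z) + z_{j+2} v₁` (1-based), component `n−2` is `v₂` and
component `n−1` is `v₁`.  Here `Φ i` is the 1-based function `φ_{i+1}`. -/
def triRHS (n : ℕ) (Φ : ℕ → (Fin n → ℝ) → ℝ) (z : Fin n → ℝ) (v : Fin 2 → ℝ) :
    Fin n → ℝ :=
  fun j => if h : j.1 + 3 ≤ n then Φ j.1 z + z ⟨j.1 + 1, by omega⟩ * v 0
           else if j.1 + 2 = n then v 1 else v 0

/-- The system `ẋ = f + g₁u₁ + g₂u₂` is transformable into the triangular form (3)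
near `p`: on an open neighborhood `V ⊆ U` of `p` there are a diffeomorphism `φ` onto
`φ(V)` and a regular static state feedback `u = α + βv` such that the closed-loop
vector field is pushed forward by `φ` to the triangular form, where each `φᵢ = Φ (i-1)`
depends only on `z₁, …, z_{i+1}, zₙ`. -/
def IsTriangularizableAt (n : ℕ) (U : Set (Fin n → ℝ)) (f g1 g2 : VF n)
    (p : Fin n → ℝ) : Prop :=
  ∃ V : Set (Fin n → ℝ), IsOpen V ∧ p ∈ V ∧ V ⊆ U ∧
    ∃ φ ψ : (Fin n → ℝ) → (Fin n → ℝ),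
      ContDiffOn ℝ (⊤ : ℕ∞) φ V ∧ IsOpen (φ '' V) ∧ ContDiffOn ℝ (⊤ : ℕ∞) ψ (φ '' V) ∧
      (∀ x ∈ V, ψ (φ x) = x) ∧
      ∃ (α : (Fin n → ℝ) → Fin 2 → ℝ) (β : (Fin n → ℝ) → Fin 2 → Fin 2 → ℝ),
        (∀ i, ContDiffOn ℝ (⊤ : ℕ∞) (fun x => α x i) V) ∧
        (∀ i j, ContDiffOn ℝ (⊤ : ℕ∞) (fun x => β x i j) V) ∧
        (∀ x ∈ V, β x 0 0 * β x 1 1 - β x 0 1 * β x 1 0 ≠ 0) ∧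
        ∃ Φ : ℕ → (Fin n → ℝ) → ℝ,
          (∀ i, i + 3 ≤ n → ContDiffOn ℝ (⊤ : ℕ∞) (Φ i) (φ '' V)) ∧
          (∀ i, i + 3 ≤ n → ∀ z z' : Fin n → ℝ,
            (∀ j : Fin n, (j.1 ≤ i + 1 ∨ j.1 + 1 = n) → z j = z' j) → Φ i z = Φ i z') ∧
          ∀ x ∈ V, ∀ v : Fin 2 → ℝ,
            fderiv ℝ φ x (f x
                + (α x 0 + β x 0 0 * v 0 + β x 0 1 * v 1) • g1 x
                + (α x 1 + β x 1 0 * v 0 + β x 1 1 * v 1) • g2 x) =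
              triRHS n Φ (φ x) v

/-- Conditions 1) and 2) of the main theorem on the set `W`:
1) `dim F_k(q) = dim G_k(q) = 2 + k` for `0 ≤ k ≤ n−2`, `q ∈ W`;
2) `(L_f ω)(q) ∈ Cᵏ_q` for `1 ≤ k ≤ n−3`, `q ∈ W`, `ω ∈ Λᵏ = (G_k)^⊥`. -/
def MainConditionsOn (n : ℕ) (U W : Set (Fin n → ℝ)) (f g1 g2 : VF n) : Prop :=
  (∀ k : ℕ, k + 2 ≤ n → ∀ q ∈ W,
      evalDim (lieFlag U (spanOn U {g1, g2}) k) q = 2 + k ∧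
      evalDim (derivedFlag U (spanOn U {g1, g2}) k) q = 2 + k) ∧
  (∀ k : ℕ, 1 ≤ k → k + 3 ≤ n → ∀ q ∈ W,
      ∀ ω ∈ annihilatorOn U (derivedFlag U (spanOn U {g1, g2}) k),
        lieDerOneForm f ω q ∈
          retractOf (annihilatorOn U (derivedFlag U (spanOn U {g1, g2}) k)) q)

end

noncomputable section
open Set Filter Topology
open scoped ContDiff

/-! ### Nemytskii operators on `C(K, E)` and smooth dependence of flows -/

/-- Pointwise application as a continuous bilinear map on spaces of continuous functions. -/
def cmApply (K : Type) [TopologicalSpace K] [CompactSpace K] (E F : Type)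
    [NormedAddCommGroup E] [NormedSpace ℝ E] [NormedAddCommGroup F] [NormedSpace ℝ F] :
    C(K, E →L[ℝ] F) →L[ℝ] C(K, E) →L[ℝ] C(K, F) :=
  LinearMap.mkContinuous₂
    (LinearMap.mk₂ ℝ (fun (A : C(K, E →L[ℝ] F)) (η : C(K, E)) =>
      (⟨fun t => A t (η t), by fun_prop⟩ : C(K, F)))
      (by intro a b c; ext t; simp) (by intro a b c; ext t; simp)
      (by intro a b c; ext t; simp) (by intro a b c; ext t; simp)) 1
    (by
      intro A η
      rw [ContinuousMap.norm_le _ (by positivity)]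
      intro t
      simp only [one_mul, LinearMap.mk₂_apply, ContinuousMap.coe_mk]
      exact (A t).le_of_opNorm_le_of_le (A.norm_coe_le_norm t) (η.norm_coe_le_norm t))

theorem cmApply_apply (K : Type) [TopologicalSpace K] [CompactSpace K] (E F : Type)
    [NormedAddCommGroup E] [NormedSpace ℝ E] [NormedAddCommGroup F] [NormedSpace ℝ F]
    (A : C(K, E →L[ℝ] F)) (η : C(K, E)) (t : K) : cmApply K E F A η t = A t (η t) := rfl

theorem nemytskii_hasFDerivAt {K : Type} [TopologicalSpace K] [CompactSpace K] {E F : Type}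
    [NormedAddCommGroup E] [NormedSpace ℝ E] [NormedAddCommGroup F] [NormedSpace ℝ F]
    (X : E → F) (hX : Continuous X) (hd : Differentiable ℝ X) (hDX : Continuous (fderiv ℝ X))
    (huc : UniformContinuous (fderiv ℝ X)) (γ : C(K, E)) :
    HasFDerivAt (fun γ : C(K, E) => (⟨X, hX⟩ : C(E, F)).comp γ)
      (cmApply K E F ((⟨fderiv ℝ X, hDX⟩ : C(E, E →L[ℝ] F)).comp γ)) γ := by
  rw [hasFDerivAt_iff_isLittleO_nhds_zero, Asymptotics.isLittleO_iff]
  intro c hc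
  obtain ⟨δ, hδ, h⟩ := Metric.uniformContinuous_iff.1 huc c hc
  filter_upwards [Metric.ball_mem_nhds (0 : C(K, E)) hδ] with η hη
  rw [ContinuousMap.norm_le _ (by positivity)]
  intro t
  have hη' : ‖η‖ < δ := by simpa using hη
  have ht : ‖η t‖ ≤ ‖η‖ := η.norm_coe_le_norm t
  have hmv := (convex_ball (γ t) δ).norm_image_sub_le_of_norm_hasFDerivWithin_le'
    (f := X) (f' := fderiv ℝ X) (φ := fderiv ℝ X (γ t)) (C := c) (x := γ t) (y := γ t + η t)
    (fun x _ => (hd x).hasFDerivAt.hasFDerivWithinAt)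
    (fun x hx => by
      have := h (a := x) (b := γ t) hx
      rw [dist_eq_norm] at this
      exact this.le) (Metric.mem_ball_self hδ)
    (by simp [Metric.mem_ball, dist_eq_norm]; linarith)
  simp only [ContinuousMap.sub_apply, ContinuousMap.comp_apply, ContinuousMap.coe_mk,
    ContinuousMap.add_apply, cmApply_apply]
  simp only [add_sub_cancel_left] at hmv
  exact hmv.trans (by gcongr)

theorem nemytskii_contDiff_nat {K : Type} [TopologicalSpace K] [CompactSpace K] {E : Type}
    [NormedAddCommGroup E] [NormedSpace ℝ E] (m : ℕ) :
    ∀ {F : Type} [NormedAddCommGroup F] [NormedSpace ℝ F]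
    (X : E → F) (hX : Continuous X) (_ : ContDiff ℝ ∞ X) (_ : HasCompactSupport X),
    ContDiff ℝ m (fun γ : C(K, E) => (⟨X, hX⟩ : C(E, F)).comp γ) := by
  induction m with
  | zero =>
    intro F _ _ X hX hs hc
    exact contDiff_zero.2 (ContinuousMap.continuous_postcomp _)
  | succ m ih =>
    intro F _ _ X hX hs hc
    have hDX : ContDiff ℝ ∞ (fderiv ℝ X) := hs.fderiv_right (by simp)
    have hcD : HasCompactSupport (fderiv ℝ X) := hc.fderiv (𝕜 := ℝ)
    have hcont : Continuous (fderiv ℝ X) := hDX.continuous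
    have := contDiff_succ_iff_hasFDerivAt (𝕜 := ℝ) (n := m)
      (f := (fun γ : C(K, E) => (⟨X, hX⟩ : C(E, F)).comp γ))
    push_cast
    rw [this]
    refine ⟨fun γ => cmApply K E F ((⟨fderiv ℝ X, hcont⟩ : C(E, E →L[ℝ] F)).comp γ), ?_, ?_⟩
    · exact (cmApply K E F).contDiff.comp (ih (fderiv ℝ X) hcont hDX hcD)
    · intro γ
      exact nemytskii_hasFDerivAt X hX (hs.differentiable (by simp)) hcont
        (hcD.uniformContinuous_of_continuous hcont) γ

theorem nemytskii_contDiff {K : Type} [TopologicalSpace K] [CompactSpace K] {E : Type}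
    [NormedAddCommGroup E] [NormedSpace ℝ E]
    {F : Type} [NormedAddCommGroup F] [NormedSpace ℝ F]
    (X : E → F) (hX : Continuous X) (hs : ContDiff ℝ ∞ X) (hc : HasCompactSupport X) :
    ContDiff ℝ ∞ (fun γ : C(K, E) => (⟨X, hX⟩ : C(E, F)).comp γ) :=
  contDiff_infty.2 fun m => nemytskii_contDiff_nat m X hX hs hc

/-- The integral operator `γ ↦ (t ↦ ∫₀ᵗ γ)` on `C([0,1], E)`. -/
def cmInt (E : Type) [NormedAddCommGroup E] [NormedSpace ℝ E] [CompleteSpace E] :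
    C(Icc (0:ℝ) 1, E) →L[ℝ] C(Icc (0:ℝ) 1, E) :=
  LinearMap.mkContinuous
    { toFun := fun γ => ⟨fun t => ∫ s in (0:ℝ)..t, IccExtend zero_le_one γ s, by
        have : Continuous (IccExtend (zero_le_one (α := ℝ)) γ) := γ.continuous.Icc_extend'
        have h2 : Continuous fun t : ℝ => ∫ s in (0:ℝ)..t, IccExtend zero_le_one γ s :=
          intervalIntegral.continuous_primitive (fun a b => this.intervalIntegrable a b) 0
        exact h2.comp continuous_subtype_val⟩
      map_add' := by
        intro γ η
        ext t
        have h1 : Continuous (IccExtend (zero_le_one (α := ℝ)) γ) := γ.continuous.Icc_extend'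
        have h2 : Continuous (IccExtend (zero_le_one (α := ℝ)) η) := η.continuous.Icc_extend'
        simp only [ContinuousMap.coe_mk, ContinuousMap.add_apply]
        rw [← intervalIntegral.integral_add (h1.intervalIntegrable _ _) (h2.intervalIntegrable _ _)]
        rfl
      map_smul' := by
        intro c γ
        ext t
        simp only [ContinuousMap.coe_mk, ContinuousMap.smul_apply, RingHom.id_apply]
        rw [← intervalIntegral.integral_smul]
        rfl } 1
    (by
      intro γ
      rw [ContinuousMap.norm_le _ (by positivity)]
      intro t
      have := intervalIntegral.norm_integral_le_of_norm_le_const (a := 0) (b := t.1) (C := ‖γ‖)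
        (f := IccExtend zero_le_one γ) (fun s _ => γ.norm_coe_le_norm _)
      refine this.trans ?_
      have h1 := t.2.1
      have h2 := t.2.2
      rw [sub_zero, abs_of_nonneg h1]
      nlinarith [norm_nonneg γ])

theorem cmInt_apply (E : Type) [NormedAddCommGroup E] [NormedSpace ℝ E] [CompleteSpace E]
    (γ : C(Icc (0:ℝ) 1, E)) (t : Icc (0:ℝ) 1) :
    cmInt E γ t = ∫ s in (0:ℝ)..t, IccExtend zero_le_one γ s := rfl

end

noncomputable section
open Set Filter Topology
open scoped ContDiff

/-- Inverse function theorem, in the form of a partial homeomorphism smooth in both directions. -/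
theorem exists_smooth_inverse {E F : Type} [NormedAddCommGroup E] [NormedSpace ℝ E]
    [CompleteSpace E] [NormedAddCommGroup F] [NormedSpace ℝ F]
    (Θ : E → F) (p : E) (N : Set E) (hN : N ∈ 𝓝 p)
    (hs : ∀ᶠ x in 𝓝 p, ContDiffAt ℝ ∞ Θ x) (e : E ≃L[ℝ] F)
    (he : HasFDerivAt Θ (e : E →L[ℝ] F) p) :
    ∃ κ : OpenPartialHomeomorph E F, p ∈ κ.source ∧ κ.source ⊆ N ∧ (∀ x, κ x = Θ x) ∧
      (∀ x ∈ κ.source, ContDiffAt ℝ ∞ Θ x) ∧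
      (∀ x ∈ κ.source, (fderiv ℝ Θ x).IsInvertible) ∧
      (∀ y ∈ κ.target, ContDiffAt ℝ ∞ κ.symm y) := by
  have hp := hs.self_of_nhds
  have hcont : ContinuousAt (fderiv ℝ Θ) p :=
    (hp.fderiv_right (m := ∞) (by simp)).continuousAt
  have hinv : ∀ᶠ x in 𝓝 p, fderiv ℝ Θ x ∈ range ContinuousLinearEquiv.toContinuousLinearMap := by
    apply hcont.eventually_mem
    rw [he.fderiv]
    exact ContinuousLinearEquiv.nhds e
  obtain ⟨s, hs1, hso, hps⟩ := mem_nhds_iff.1 (inter_mem (hs.and hinv) hN)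
  let κ₀ := ContDiffAt.toOpenPartialHomeomorph Θ hp he (by simp)
  have hκ₀ : ∀ x, κ₀ x = Θ x := fun x => rfl
  refine ⟨κ₀.restrOpen s hso, ?_, ?_, ?_, ?_, ?_, ?_⟩
  · exact ⟨ContDiffAt.mem_toOpenPartialHomeomorph_source hp he (by simp), hps⟩
  · exact fun x hx => (hs1 hx.2).2
  · exact fun x => rfl
  · exact fun x hx => (hs1 hx.2).1.1
  · intro x hx
    obtain ⟨f', hf'⟩ := (hs1 hx.2).1.2
    exact ⟨f', hf'⟩
  · intro y hy
    have hx : (κ₀.restrOpen s hso).symm y ∈ (κ₀.restrOpen s hso).source :=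
      (κ₀.restrOpen s hso).map_target hy
    obtain ⟨f', hf'⟩ := (hs1 hx.2).1.2
    have hc := (hs1 hx.2).1.1
    refine (κ₀.restrOpen s hso).contDiffAt_symm hy (f₀' := f') ?_ hc
    rw [hf']
    exact (hc.differentiableAt (by simp)).hasFDerivAt

/-- Smooth dependence of the flow on the initial condition. -/
theorem exists_smooth_flow {E : Type} [NormedAddCommGroup E] [NormedSpace ℝ E]
    [CompleteSpace E] (X : E → E) (hX : ContDiff ℝ ∞ X) (hXc : HasCompactSupport X) (p : E) :
    ∃ Φ : E × ℝ → E, ∀ᶠ z in 𝓝 (p, (0:ℝ)), ContDiffAt ℝ ∞ Φ z ∧ Φ (z.1, 0) = z.1 ∧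
      HasDerivAt (fun s => Φ (z.1, s)) (X (Φ z)) z.2 := by
  obtain ⟨r, hr, ε, hε, hα⟩ :=
    ContDiffAt.exists_forall_mem_closedBall_exists_eq_forall_mem_Ioo_hasDerivAt
      (f := X) (x₀ := p) (hX.contDiffAt.of_le (by simp)) 0
  choose! α hα0 hαd using hα
  simp only [zero_sub, zero_add] at hαd
  obtain ⟨M, hM⟩ : ∃ M, ∀ x, ‖X x‖ ≤ M := hXc.exists_bound_of_continuous hX.continuous
  have hM0 : 0 ≤ M := (norm_nonneg _).trans (hM p)
  have hαn : ∀ x ∈ Metric.closedBall p r, ∀ t ∈ Ioo (-ε) ε, ‖α x t - x‖ ≤ M * |t| := by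
    intro x hx t ht
    have := Convex.norm_image_sub_le_of_norm_hasDerivWithin_le (f := α x)
      (f' := fun t => X (α x t)) (s := Ioo (-ε) ε) (x := 0) (y := t) (C := M)
      (fun t ht => (hαd x hx t ht).hasDerivWithinAt) (fun t _ => hM _) (convex_Ioo _ _)
      ⟨by linarith, hε⟩ ht
    rwa [hα0 x hx, sub_zero, Real.norm_eq_abs] at this
  let C := C(Icc (0:ℝ) 1, E)
  let N : C → C := fun γ => (⟨X, hX.continuous⟩ : C(E, E)).comp γ
  have hN : ContDiff ℝ ∞ N := nemytskii_contDiff X hX.continuous hX hXc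
  let cst : E →L[ℝ] C := ContinuousLinearMap.const ℝ (Icc (0:ℝ) 1)
  have hcst : ∀ x t, cst x t = x := fun x t => rfl
  let Θ : (E × ℝ) × C → (E × ℝ) × C := fun z =>
    (z.1, z.2 - cst z.1.1 - z.1.2 • cmInt E (N z.2))
  have hΘ : ContDiff ℝ ∞ Θ := by
    have h1 : ContDiff ℝ ∞ (fun z : (E × ℝ) × C => cst z.1.1) :=
      cst.contDiff.comp (contDiff_fst.comp contDiff_fst)
    have h2 : ContDiff ℝ ∞ (fun z : (E × ℝ) × C => cmInt E (N z.2)) :=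
      (cmInt E).contDiff.comp (hN.comp contDiff_snd)
    exact contDiff_fst.prodMk ((contDiff_snd.sub h1).sub
      ((contDiff_snd.comp contDiff_fst).smul h2))
  let u : (E × ℝ) × C := ((p, 0), cst p)
  let w : C := cmInt E (N (cst p))
  let R : (E × ℝ) →L[ℝ] C :=
    cst.comp (ContinuousLinearMap.fst ℝ E ℝ) + (ContinuousLinearMap.snd ℝ E ℝ).smulRight w
  let e : ((E × ℝ) × C) ≃L[ℝ] ((E × ℝ) × C) :=
    ContinuousLinearEquiv.equivOfInverse
      ((ContinuousLinearMap.fst ℝ (E × ℝ) C).prod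
        (ContinuousLinearMap.snd ℝ (E × ℝ) C - R.comp (ContinuousLinearMap.fst ℝ (E × ℝ) C)))
      ((ContinuousLinearMap.fst ℝ (E × ℝ) C).prod
        (ContinuousLinearMap.snd ℝ (E × ℝ) C + R.comp (ContinuousLinearMap.fst ℝ (E × ℝ) C)))
      (by intro z; simp) (by intro z; simp)
  have he : HasFDerivAt Θ (e : ((E × ℝ) × C) →L[ℝ] ((E × ℝ) × C)) u := by
    have h1 : HasFDerivAt (fun z : (E × ℝ) × C => cst z.1.1)
        (cst.comp ((ContinuousLinearMap.fst ℝ E ℝ).comp (ContinuousLinearMap.fst ℝ (E × ℝ) C))) u :=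
      ContinuousLinearMap.hasFDerivAt
        (cst.comp ((ContinuousLinearMap.fst ℝ E ℝ).comp (ContinuousLinearMap.fst ℝ (E × ℝ) C)))
    have h2 : DifferentiableAt ℝ (fun z : (E × ℝ) × C => cmInt E (N z.2)) u :=
      (((cmInt E).contDiff.comp (hN.comp contDiff_snd)).differentiable (by simp)).differentiableAt
    have h3 : HasFDerivAt (fun z : (E × ℝ) × C => z.1.2)
        ((ContinuousLinearMap.snd ℝ E ℝ).comp (ContinuousLinearMap.fst ℝ (E × ℝ) C)) u :=
      ContinuousLinearMap.hasFDerivAt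
        ((ContinuousLinearMap.snd ℝ E ℝ).comp (ContinuousLinearMap.fst ℝ (E × ℝ) C))
    have h4 := (hasFDerivAt_fst (𝕜 := ℝ) (p := u)).prodMk
      ((((hasFDerivAt_snd (𝕜 := ℝ) (p := u)).sub h1).sub (h3.smul h2.hasFDerivAt)))
    refine h4.congr_fderiv ?_
    ext z <;> simp [e, R, u, w, sub_sub]
  obtain ⟨κ, hu, -, hκ, -, -, hκs⟩ := exists_smooth_inverse Θ u univ univ_mem
    (Eventually.of_forall fun x => hΘ.contDiffAt) e he
  obtain ⟨ρ, hρ, hball⟩ := Metric.isOpen_iff.1 κ.open_source u hu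
  -- the curve attached to `(x, s)`
  obtain ⟨δ, hδ, hδε, hδr, hδρ, hδM⟩ : ∃ δ > 0, δ < ε ∧ δ < r ∧ δ < ρ ∧ δ + M * δ < ρ := by
    refine ⟨min (min (ε/2) (r/2)) (ρ / (2 * (1 + M))), by positivity, ?_, ?_, ?_, ?_⟩
    · have := min_le_left (min (ε/2) (r/2)) (ρ / (2 * (1 + M)))
      have := min_le_left (ε/2) (r/2)
      linarith
    · have := min_le_left (min (ε/2) (r/2)) (ρ / (2 * (1 + M)))
      have := min_le_right (ε/2) (r/2)
      linarith
    all_goals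
      have h1 := min_le_right (min (ε/2) (r/2)) (ρ / (2 * (1 + M)))
      set d := min (min (ε/2) (r/2)) (ρ / (2 * (1 + M)))
      have h2 : 0 ≤ d := by positivity
      rw [le_div_iff₀ (by positivity)] at h1
      nlinarith
  have key : ∀ x ∈ Metric.ball p δ, ∀ s ∈ Ioo (-δ) δ,
      ((x, s), (0 : C)) ∈ κ.target ∧ (κ.symm ((x, s), 0)).2 ⟨1, by simp⟩ = α x s := by
    intro x hx s hs
    have hxr : x ∈ Metric.closedBall p r :=
      Metric.ball_subset_closedBall (Metric.ball_subset_ball hδr.le hx)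
    have hst : ∀ t ∈ Icc (0:ℝ) 1, s * t ∈ Ioo (-δ) δ := by
      intro t ht
      rw [mem_Ioo, ← abs_lt, abs_mul, abs_of_nonneg ht.1]
      have := abs_lt.2 hs
      nlinarith [abs_nonneg s, ht.2]
    have hstε : ∀ t ∈ Icc (0:ℝ) 1, s * t ∈ Ioo (-ε) ε := fun t ht =>
      ⟨by linarith [(hst t ht).1], by linarith [(hst t ht).2]⟩
    have hder : ∀ t ∈ Icc (0:ℝ) 1, HasDerivAt (fun t => α x (s * t)) (s • X (α x (s * t))) t := by
      intro t ht
      have h1 : HasDerivAt (fun t : ℝ => s * t) s t := by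
        simpa using (hasDerivAt_id t).const_mul s
      exact (hαd x hxr _ (hstε t ht)).scomp t h1
    have hcontOn : ContinuousOn (fun t => α x (s * t)) (Icc 0 1) :=
      fun t ht => (hder t ht).continuousAt.continuousWithinAt
    let c : C := ⟨fun t => α x (s * t), hcontOn.domRestrict⟩
    have hc : ∀ t : Icc (0:ℝ) 1, c t = α x (s * t) := fun t => rfl
    have hfix : c - cst x - s • cmInt E (N c) = 0 := by
      ext t
      have hItg : ∫ τ in (0:ℝ)..t, s • X (α x (s * τ)) = α x (s * t) - α x (s * 0) := by
        have hsub : uIcc (0:ℝ) t ⊆ Icc 0 1 := by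
          rw [uIcc_of_le t.2.1]
          exact Icc_subset_Icc le_rfl t.2.2
        apply intervalIntegral.integral_eq_sub_of_hasDerivAt (f := fun t => α x (s * t))
        · exact fun τ hτ => hder τ (hsub hτ)
        · apply ContinuousOn.intervalIntegrable
          exact (hX.continuous.comp_continuousOn (hcontOn.mono hsub)).const_smul s
      have hext : ∫ τ in (0:ℝ)..t, s • X (α x (s * τ))
          = s • ∫ τ in (0:ℝ)..t, IccExtend zero_le_one (N c) τ := by
        rw [← intervalIntegral.integral_smul]
        apply intervalIntegral.integral_congr
        intro τ hτ
        rw [uIcc_of_le t.2.1] at hτ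
        have hτ' : τ ∈ Icc (0:ℝ) 1 := ⟨hτ.1, hτ.2.trans t.2.2⟩
        simp only
        rw [IccExtend_of_mem _ _ hτ']
        rfl
      change c t - cst x t - s • (cmInt E (N c) t) = 0
      rw [hc, hcst, cmInt_apply, ← hext, hItg, mul_zero, hα0 x hxr]
      simp
    have hsrc : ((x, s), c) ∈ κ.source := by
      apply hball
      rw [← ball_prod_same, ← ball_prod_same]
      refine ⟨⟨Metric.ball_subset_ball hδρ.le hx, ?_⟩, ?_⟩
      · simp only [Metric.mem_ball, dist_zero_right, Real.norm_eq_abs, u]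
        exact (abs_lt.2 hs).trans hδρ
      · simp only [Metric.mem_ball, u]
        rw [dist_eq_norm]
        refine lt_of_le_of_lt ?_ hδM
        rw [ContinuousMap.norm_le _ (by positivity)]
        intro t
        have h1 := hαn x hxr (s * t) (hstε t t.2)
        have h2 := (abs_lt.2 (hst t t.2))
        have h3 : ‖x - p‖ < δ := by simpa [dist_eq_norm] using hx
        have h4 : (c - cst p) t = (α x (s * t) - x) + (x - p) := by
          change c t - cst p t = _
          rw [hc, hcst]
          abel
        rw [h4]
        refine (norm_add_le _ _).trans ?_
        have : M * |s * t| ≤ M * δ := by gcongr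
        linarith
    have hval : κ ((x, s), c) = ((x, s), 0) := by
      rw [hκ]
      simp only [Θ]
      rw [hfix]
    refine ⟨hval ▸ κ.map_source hsrc, ?_⟩
    rw [← hval, κ.left_inv hsrc, hc]
    simp
  refine ⟨fun z => (κ.symm (z, 0)).2 ⟨1, by simp⟩, ?_⟩
  have hnhds : Metric.ball p δ ×ˢ Ioo (-δ) δ ∈ 𝓝 (p, (0:ℝ)) :=
    prod_mem_nhds (Metric.ball_mem_nhds p hδ) (Ioo_mem_nhds (by linarith) hδ)
  filter_upwards [hnhds] with z hz
  obtain ⟨hz1, hz2⟩ := hz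
  have hxr : z.1 ∈ Metric.closedBall p r :=
      Metric.ball_subset_closedBall (Metric.ball_subset_ball hδr.le hz1)
  refine ⟨?_, ?_, ?_⟩
  · have h1 := hκs _ (key z.1 hz1 z.2 hz2).1
    have h2 : ContDiffAt ℝ ∞ (fun z : E × ℝ => (z, (0 : C))) z :=
      contDiffAt_id.prodMk contDiffAt_const
    have h3 : ContDiffAt ℝ ∞ (fun z : E × ℝ => κ.symm (z, (0 : C))) z := ContDiffAt.comp z h1 h2
    exact (ContinuousMap.evalCLM ℝ (⟨1, by simp⟩ : Icc (0:ℝ) 1)).contDiff.contDiffAt.comp z h3.snd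
  · rw [(key z.1 hz1 0 ⟨by linarith, hδ⟩).2, hα0 _ hxr]
  · have h1 : (fun s => (κ.symm ((z.1, s), 0)).2 ⟨1, by simp⟩) =ᶠ[𝓝 z.2] α z.1 := by
      filter_upwards [Ioo_mem_nhds hz2.1 hz2.2] with s hs
      exact (key z.1 hz1 s hs).2
    have h2 : (κ.symm (z, 0)).2 ⟨1, by simp⟩ = α z.1 z.2 := (key z.1 hz1 z.2 hz2).2
    rw [h2]
    exact (hαd z.1 hxr z.2 ⟨by linarith [hz2.1], by linarith [hz2.2]⟩).congr_of_eventuallyEq h1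

end

noncomputable section
open Set Filter Topology
open scoped ContDiff

section CutoffFlow
variable {E : Type} [NormedAddCommGroup E] [NormedSpace ℝ E] [FiniteDimensional ℝ E]

theorem exists_cutoff {F : Type} [NormedAddCommGroup F] [NormedSpace ℝ F]
    (Y : E → F) (p : E) (hY : ∀ᶠ x in 𝓝 p, ContDiffAt ℝ ∞ Y x) (N : Set E) (hN : N ∈ 𝓝 p) :
    ∃ χ : E → ℝ, ContDiff ℝ ∞ χ ∧ (∀ᶠ x in 𝓝 p, χ x = 1) ∧ HasCompactSupport χ ∧
      tsupport χ ⊆ N ∧ ContDiff ℝ ∞ (fun x => χ x • Y x) := by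
  obtain ⟨r, hr, hsub⟩ := Metric.nhds_basis_closedBall.mem_iff.1 (inter_mem hY hN)
  let b : ContDiffBump p := ⟨r / 2, r, by positivity, by linarith⟩
  have hts : tsupport b = Metric.closedBall p r := b.tsupport_eq
  refine ⟨b, b.contDiff, b.eventuallyEq_one, b.hasCompactSupport, ?_, ?_⟩
  · rw [hts]; exact fun x hx => (hsub hx).2
  · rw [contDiff_iff_contDiffAt]
    intro x
    by_cases hx : x ∈ tsupport b
    · rw [hts] at hx
      exact b.contDiff.contDiffAt.smul (hsub hx).1
    · have h0 := notMem_tsupport_iff_eventuallyEq.1 hx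
      refine (contDiffAt_const (c := (0 : F))).congr_of_eventuallyEq ?_
      filter_upwards [h0] with y hy
      simp [hy]

theorem flow_box (X : E → E) (q : E) (hX : ∀ᶠ x in 𝓝 q, ContDiffAt ℝ ∞ X x) (hne : X q ≠ 0)
    (N : Set E) (hN : N ∈ 𝓝 q) :
    ∃ E' : Submodule ℝ E, Module.finrank ℝ E' + 1 = Module.finrank ℝ E ∧
    ∃ κ : OpenPartialHomeomorph (E' × ℝ) E, ((0 : E'), (0:ℝ)) ∈ κ.source ∧ κ (0, 0) = q ∧
      κ.target ⊆ N ∧ (∀ z ∈ κ.source, ContDiffAt ℝ ∞ κ z) ∧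
      (∀ z ∈ κ.source, (fderiv ℝ κ z).IsInvertible) ∧
      (∀ y ∈ κ.target, ContDiffAt ℝ ∞ κ.symm y) ∧
      (∀ z ∈ κ.source, fderiv ℝ κ z (0, 1) = X (κ z)) := by
  obtain ⟨χ, -, hχ1, hχc, -, hχX⟩ := exists_cutoff X q hX univ univ_mem
  obtain ⟨Φ, hΦ⟩ := exists_smooth_flow (fun x => χ x • X x) hχX (hχc.smul_right) q
  obtain ⟨E', hE'⟩ := Submodule.exists_isCompl (Submodule.span ℝ {X q})
  have hfin : Module.finrank ℝ E' + 1 = Module.finrank ℝ E := by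
    have := Submodule.finrank_add_eq_of_isCompl hE'
    rw [finrank_span_singleton hne] at this
    omega
  refine ⟨E', hfin, ?_⟩
  let ι : E' × ℝ → E × ℝ := fun z => (q + z.1, z.2)
  let L : E' × ℝ →L[ℝ] E × ℝ := E'.subtypeL.prodMap (ContinuousLinearMap.id ℝ ℝ)
  have hι : ∀ z, HasFDerivAt ι L z := by
    intro z
    have h : ι = fun z => (q, (0:ℝ)) + L z := by
      ext z <;> simp [ι, L]
    rw [h]
    exact L.hasFDerivAt.const_add _
  have hιs : ContDiff ℝ ∞ ι := by
    have h : ι = fun z => (q, (0:ℝ)) + L z := by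
      ext z <;> simp [ι, L]
    rw [h]
    exact contDiff_const.add L.contDiff
  have hι0 : ι 0 = (q, 0) := by simp [ι]
  have hιt : Tendsto ι (𝓝 0) (𝓝 (q, 0)) := hι0 ▸ hιs.continuous.tendsto 0
  have hev := hιt.eventually hΦ
  let Θ : E' × ℝ → E := fun z => Φ (ι z)
  have hΘ : ∀ᶠ z in 𝓝 0, ContDiffAt ℝ ∞ Θ z := hev.mono fun z hz =>
    ContDiffAt.comp z hz.1 hιs.contDiffAt
  have hq := hΦ.self_of_nhds
  have hΦq : DifferentiableAt ℝ Φ (q, 0) := hq.1.differentiableAt (by simp)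
  have hχq : χ q = 1 := hχ1.self_of_nhds
  have hΘ0 : Θ 0 = q := by
    simp only [Θ]; rw [hι0]; exact hq.2.1
  have hder : ∀ᶠ z in 𝓝 (0 : E' × ℝ), fderiv ℝ Θ z (0, 1) = χ (Θ z) • X (Θ z) := by
    filter_upwards [hev] with z hz
    have h1 : HasFDerivAt Θ ((fderiv ℝ Φ (ι z)).comp L) z :=
      (hz.1.differentiableAt (by simp)).hasFDerivAt.comp z (hι z)
    rw [h1.fderiv]
    have h2 : HasDerivAt (fun s => Φ ((ι z).1, s)) (fderiv ℝ Φ (ι z) (0, 1)) (ι z).2 := by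
      have h3 : HasDerivAt (fun s : ℝ => ((ι z).1, s)) (0, 1) (ι z).2 :=
        (hasDerivAt_const _ _).prodMk (hasDerivAt_id _)
      exact ((hz.1.differentiableAt (by simp)).hasFDerivAt (x := ((ι z).1, (ι z).2))).comp_hasDerivAt
        (ι z).2 h3
    have h4 := h2.unique hz.2.2
    simpa [L] using h4
  have hΘc : ContinuousAt Θ 0 := hΘ.self_of_nhds.continuousAt
  have hχΘ : ∀ᶠ z in 𝓝 (0 : E' × ℝ), χ (Θ z) = 1 := by
    have h : ∀ᶠ y in 𝓝 (Θ 0), χ y = 1 := by rw [hΘ0]; exact hχ1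
    exact hΘc.eventually h
  have hNΘ : Θ ⁻¹' N ∈ 𝓝 (0 : E' × ℝ) := by
    apply hΘc
    rw [hΘ0]; exact hN
  let T : E' × ℝ →L[ℝ] E :=
    E'.subtypeL.comp (ContinuousLinearMap.fst ℝ E' ℝ) +
      (ContinuousLinearMap.snd ℝ E' ℝ).smulRight (X q)
  have hT : ∀ z, T z = z.1 + z.2 • X q := fun z => by simp [T]
  have hTd : HasFDerivAt Θ T 0 := by
    have h1 : HasFDerivAt Θ ((fderiv ℝ Φ (q, 0)).comp L) 0 := by
      refine HasFDerivAt.comp (x := (0 : E' × ℝ)) (g := Φ) (f := ι) ?_ (hι 0)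
      rw [hι0]; exact hΦq.hasFDerivAt
    refine h1.congr_fderiv ?_
    have hA : ∀ v : E, fderiv ℝ Φ (q, 0) (v, 0) = v := by
      intro v
      have h3 : HasFDerivAt (fun x : E => (x, (0:ℝ))) (ContinuousLinearMap.inl ℝ E ℝ) q :=
        (ContinuousLinearMap.inl ℝ E ℝ).hasFDerivAt
      have h4 : HasFDerivAt (fun x : E => Φ (x, 0))
          ((fderiv ℝ Φ (q, 0)).comp (ContinuousLinearMap.inl ℝ E ℝ)) q :=
        HasFDerivAt.comp (x := q) (g := Φ) (f := fun x : E => (x, (0:ℝ))) hΦq.hasFDerivAt h3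
      have h5 : HasFDerivAt (fun x : E => Φ (x, 0)) (ContinuousLinearMap.id ℝ E) q := by
        refine (hasFDerivAt_id q).congr_of_eventuallyEq ?_
        have h6 : Tendsto (fun x : E => (x, (0:ℝ))) (𝓝 q) (𝓝 (q, 0)) :=
          (Continuous.prodMk_left (0:ℝ)).tendsto q
        filter_upwards [h6.eventually hΦ] with x hx
        exact hx.2.1
      have := congrArg (fun A => A v) (h4.unique h5)
      simpa using this
    have hB : fderiv ℝ Φ (q, 0) (0, 1) = X q := by
      have h0 := hder.self_of_nhds
      rw [h1.fderiv, hΘ0, hχq] at h0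
      simpa [L] using h0
    refine ContinuousLinearMap.ext fun z => ?_
    have hz : L z = ((z.1 : E), (0:ℝ)) + z.2 • ((0 : E), (1:ℝ)) := by
      ext <;> simp [L]
    rw [ContinuousLinearMap.comp_apply, hz, map_add, map_smul, hA, hB, hT]
  have hbij : Function.Bijective T := by
    constructor
    · rw [injective_iff_map_eq_zero]
      intro z hz
      rw [hT] at hz
      have h1 : z.2 • X q ∈ Submodule.span ℝ {X q} :=
        Submodule.smul_mem _ _ (Submodule.mem_span_singleton_self _)
      have h2 : z.2 • X q ∈ E' := by
        have : z.2 • X q = - (z.1 : E) := by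
          rw [eq_neg_iff_add_eq_zero, add_comm]; exact hz
        rw [this]; exact E'.neg_mem z.1.2
      have h3 : z.2 • X q = 0 := Submodule.disjoint_def.1 hE'.disjoint _ h1 h2
      have h4 : z.2 = 0 := (smul_eq_zero.1 h3).resolve_right hne
      rw [h3, add_zero] at hz
      ext
      · simpa using hz
      · exact h4
    · intro v
      have hv : v ∈ Submodule.span ℝ {X q} ⊔ E' := by rw [hE'.sup_eq_top]; trivial
      obtain ⟨a, ha, b, hb, rfl⟩ := Submodule.mem_sup.1 hv
      obtain ⟨c, rfl⟩ := Submodule.mem_span_singleton.1 ha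
      exact ⟨(⟨b, hb⟩, c), by rw [hT]; simp [add_comm]⟩
  let e : (E' × ℝ) ≃L[ℝ] E := (LinearEquiv.ofBijective (T : E' × ℝ →ₗ[ℝ] E) hbij).toContinuousLinearEquiv
  have he : HasFDerivAt Θ (e : E' × ℝ →L[ℝ] E) 0 := by
    refine hTd.congr_fderiv ?_
    exact ContinuousLinearMap.ext fun z => rfl
  obtain ⟨κ, h0, hsrc, hκ, hs1, hs2, hs3⟩ := exists_smooth_inverse Θ 0 _
    (inter_mem hNΘ (inter_mem hder hχΘ)) hΘ e he
  have hκΘ : (κ : E' × ℝ → E) = Θ := funext hκ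
  refine ⟨κ, h0, ?_, ?_, ?_, ?_, hs3, ?_⟩
  · rw [hκ]; exact hΘ0
  · intro y hy
    have h := (hsrc (κ.map_target hy)).1
    rw [mem_preimage, ← hκ, κ.right_inv hy] at h
    exact h
  · rw [hκΘ]; exact hs1
  · rw [hκΘ]; exact hs2
  · intro z hz
    have h := (hsrc hz).2
    rw [hκΘ]
    have h2 := h.1
    have h3 : χ (Θ z) = 1 := h.2
    simp only [Set.mem_ofPred_eq, h3, one_smul] at h2
    exact h2

end CutoffFlow

end

noncomputable section
open Set Filter Topology
open scoped ContDiff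
set_option linter.unusedSectionVars false
set_option linter.deprecated false

section Frames
variable {E : Type} [NormedAddCommGroup E] [NormedSpace ℝ E] [FiniteDimensional ℝ E]

/-- Local smooth section of a field of subspaces. -/
def Sec (G : E → Submodule ℝ E) (X : E → E) (q : E) : Prop :=
  ∀ᶠ x in 𝓝 q, ContDiffAt ℝ ∞ X x ∧ X x ∈ G x

/-- `e` is a frame of `G` at `x`, with coefficient forms `θ`. -/
def FrAt {ι : Type} [Fintype ι] (G : E → Submodule ℝ E) (e : ι → E → E)
    (θ : ι → E → (E →L[ℝ] ℝ)) (x : E) : Prop :=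
  (∀ i, ContDiffAt ℝ ∞ (e i) x) ∧ (∀ i, ContDiffAt ℝ ∞ (θ i) x) ∧ (∀ i, e i x ∈ G x) ∧
    (∀ Z ∈ G x, ∑ i, θ i x Z • e i x = Z) ∧ LinearIndependent ℝ (fun i => e i x)

theorem exists_dual {ι : Type} [Fintype ι] [DecidableEq ι] (e : ι → E → E) (q : E)
    (he : ∀ᶠ x in 𝓝 q, ∀ i, ContDiffAt ℝ ∞ (e i) x)
    (hli : LinearIndependent ℝ (fun i => e i q)) :
    ∃ θ : ι → E → (E →L[ℝ] ℝ), ∀ᶠ x in 𝓝 q, (∀ i, ContDiffAt ℝ ∞ (θ i) x) ∧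
      (∀ i j, θ i x (e j x) = if i = j then 1 else 0) ∧
      (∀ v, (∀ i, θ i x v = 0) ↔ ∀ i, θ i q v = 0) := by
  obtain ⟨T, hT⟩ : ∃ T : E →ₗ[ℝ] (ι → ℝ), ∀ j, T (e j q) = Pi.single j 1 := by
    let S : (ι → ℝ) →ₗ[ℝ] E := Fintype.linearCombination ℝ (fun i => e i q)
    have hS : LinearMap.ker S = ⊥ := by
      rw [LinearMap.ker_eq_bot]
      exact linearIndependent_iff_injective_fintypeLinearCombination.1 hli
    obtain ⟨T, hT⟩ := S.exists_leftInverse_of_injective hS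
    refine ⟨T, fun j => ?_⟩
    have h1 : S (Pi.single j 1) = e j q := by
      simp [S, Fintype.linearCombination_apply_single]
    rw [← h1, ← LinearMap.comp_apply, hT]; rfl
  let θ₀ : ι → (E →L[ℝ] ℝ) := fun i =>
    LinearMap.toContinuousLinearMap ((LinearMap.proj i).comp T)
  have hθ₀ : ∀ i j, θ₀ i (e j q) = if i = j then 1 else 0 := by
    intro i j
    simp [θ₀, hT, Pi.single_apply]
  let A : E → (E →L[ℝ] E) := fun x =>
    ContinuousLinearMap.id ℝ E + ∑ i, (θ₀ i).smulRight (e i x - e i q)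
  have hA : ∀ x v, A x v = v + ∑ i, θ₀ i v • (e i x - e i q) := by
    intro x v; simp [A]
  have hAq : A q = ContinuousLinearMap.id ℝ E := by
    ext v; simp [hA]
  have hAs : ∀ᶠ x in 𝓝 q, ContDiffAt ℝ ∞ A x := by
    filter_upwards [he] with x hx
    refine contDiffAt_const.add (ContDiffAt.sum fun i _ => ?_)
    exact ContDiffAt.smulRight contDiffAt_const ((hx i).sub contDiffAt_const)
  have hinv : ∀ᶠ x in 𝓝 q, (A x).IsInvertible := by
    have h1 : ContinuousAt A q := hAs.self_of_nhds.continuousAt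
    refine h1.eventually_mem (s := {B : E →L[ℝ] E | B.IsInvertible}) ?_
    rw [hAq]
    exact ContinuousLinearEquiv.nhds (ContinuousLinearEquiv.refl ℝ E)
  refine ⟨fun i x => (θ₀ i).comp (A x).inverse, ?_⟩
  have hθq : ∀ i v, ((θ₀ i).comp (A q).inverse) v = θ₀ i v := by
    intro i v
    rw [hAq]; simp [ContinuousLinearMap.inverse_id]
  filter_upwards [hAs, hinv] with x hx hix
  refine ⟨?_, ?_, ?_⟩
  · intro i
    exact contDiffAt_const.clm_comp ((hix.contDiffAt_map_inverse).comp x hx)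
  · intro i j
    have h1 : A x (e j q) = e j x := by
      rw [hA]
      simp [hθ₀]
    rw [← h1, ContinuousLinearMap.comp_apply, hix.inverse_apply_self, hθ₀]
  · intro v
    simp only [hθq]
    constructor
    swap
    · intro hv i
      have h1 : A x v = v := by rw [hA]; simp [hv]
      have h2 : (A x).inverse v = v := by
        rw [hix.inverse_apply_eq, h1]
      rw [ContinuousLinearMap.comp_apply, h2]; exact hv i
    intro hv i
    have h1 : A x ((A x).inverse v) = v := hix.self_apply_inverse v
    have h2 : (A x).inverse v = v := by
      rw [hA] at h1
      have h3 : ∀ i, θ₀ i ((A x).inverse v) = 0 := hv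
      simpa [h3] using h1
    have := hv i
    rwa [ContinuousLinearMap.comp_apply, h2] at this

/-- Sections forming a basis at `q` form a local frame. -/
theorem exists_frame {ι : Type} [Fintype ι] [DecidableEq ι] (G : E → Submodule ℝ E) (e : ι → E → E)
    (q : E) (hr : ∀ᶠ x in 𝓝 q, Module.finrank ℝ (G x) = Fintype.card ι)
    (he : ∀ i, Sec G (e i) q) (hli : LinearIndependent ℝ (fun i => e i q)) :
    ∃ θ : ι → E → (E →L[ℝ] ℝ), ∀ᶠ x in 𝓝 q, FrAt G e θ x ∧
      (∀ v, (∀ i, θ i x v = 0) ↔ ∀ i, θ i q v = 0) := by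
  have he' : ∀ᶠ x in 𝓝 q, ∀ i, ContDiffAt ℝ ∞ (e i) x ∧ e i x ∈ G x := eventually_all.2 he
  obtain ⟨θ, hθ⟩ := exists_dual e q (he'.mono fun x hx i => (hx i).1) hli
  refine ⟨θ, ?_⟩
  filter_upwards [hθ, he', hr] with x hx hex hrx
  have hdual : ∀ c : ι → ℝ, ∀ i, θ i x (∑ j, c j • e j x) = c i := by
    intro c i
    simp [map_sum, hx.2.1]
  have hlix : LinearIndependent ℝ (fun i => e i x) := by
    rw [Fintype.linearIndependent_iff]
    intro c hc i
    rw [← hdual c i, hc, map_zero]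
  refine ⟨⟨fun i => (hex i).1, hx.1, fun i => (hex i).2, ?_, hlix⟩, hx.2.2⟩
  intro Z hZ
  have hsp : Submodule.span ℝ (range fun i => e i x) = G x := by
    apply Submodule.eq_of_le_of_finrank_eq
    · rw [Submodule.span_le]
      rintro _ ⟨i, rfl⟩
      exact (hex i).2
    · rw [finrank_span_eq_card hlix, hrx]
  rw [← hsp, Submodule.mem_span_range_iff_exists_fun] at hZ
  obtain ⟨c, rfl⟩ := hZ
  simp [hdual]

theorem sec_smul_sum {ι : Type} [Fintype ι] {G : E → Submodule ℝ E} {e : ι → E → E} {q : E}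
    (he : ∀ i, Sec G (e i) q) (c : ι → E → ℝ) (hc : ∀ i, ∀ᶠ x in 𝓝 q, ContDiffAt ℝ ∞ (c i) x) :
    Sec G (fun x => ∑ i, c i x • e i x) q := by
  have h1 := eventually_all.2 he
  have h2 := eventually_all.2 hc
  filter_upwards [h1, h2] with x hx1 hx2
  exact ⟨ContDiffAt.sum fun i _ => (hx2 i).smul (hx1 i).1,
    Submodule.sum_mem _ fun i _ => Submodule.smul_mem _ _ (hx1 i).2⟩

theorem Sec.bracket_smooth {X Y : E → E} {q : E} (hX : ∀ᶠ x in 𝓝 q, ContDiffAt ℝ ∞ X x)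
    (hY : ∀ᶠ x in 𝓝 q, ContDiffAt ℝ ∞ Y x) :
    ∀ᶠ x in 𝓝 q, ContDiffAt ℝ ∞ (VectorField.lieBracket ℝ X Y) x := by
  filter_upwards [hX, hY] with x h1 h2
  exact h1.lieBracket_vectorField h2 (by simp)

theorem lieBracket_sum_right {ι : Type} [Fintype ι] (X : E → E) (e : ι → E → E) (c : ι → E → ℝ)
    (x : E) (hc : ∀ i, DifferentiableAt ℝ (c i) x) (he : ∀ i, DifferentiableAt ℝ (e i) x) :
    VectorField.lieBracket ℝ X (fun y => ∑ i, c i y • e i y) x =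
      ∑ i, (fderiv ℝ (c i) x (X x) • e i x + c i x • VectorField.lieBracket ℝ X (e i) x) := by
  have h : HasFDerivAt (fun y => ∑ i, c i y • e i y)
      (∑ i, (c i x • fderiv ℝ (e i) x + (fderiv ℝ (c i) x).smulRight (e i x))) x :=
    HasFDerivAt.fun_sum fun i _ => (hc i).hasFDerivAt.smul (he i).hasFDerivAt
  simp only [VectorField.lieBracket, h.fderiv]
  simp only [ContinuousLinearMap.sum_apply, ContinuousLinearMap.add_apply,
    ContinuousLinearMap.smul_apply, ContinuousLinearMap.smulRight_apply, map_sum, map_smul,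
    smul_sub]
  rw [← Finset.sum_sub_distrib]
  exact Finset.sum_congr rfl fun i _ => by abel

/-- Brackets with sections are controlled by brackets with a frame. -/
theorem bracket_mem_of_frame {ι : Type} [Fintype ι] {G : E → Submodule ℝ E} {e : ι → E → E}
    {θ : ι → E → (E →L[ℝ] ℝ)} {q : E} (hfr : ∀ᶠ x in 𝓝 q, FrAt G e θ x)
    (H : Submodule ℝ E) (hH : G q ≤ H) (X : E → E)
    (hX : ∀ i, VectorField.lieBracket ℝ X (e i) q ∈ H) {Y : E → E} (hY : Sec G Y q) :
    VectorField.lieBracket ℝ X Y q ∈ H := by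
  have hYe : Y =ᶠ[𝓝 q] fun y => ∑ i, θ i y (Y y) • e i y := by
    filter_upwards [hfr, hY] with x h1 h2
    exact (h1.2.2.2.1 _ h2.2).symm
  have hq := hfr.self_of_nhds
  have hYq := hY.self_of_nhds
  rw [EventuallyEq.lieBracket_vectorField_eq (EventuallyEq.refl _ X) hYe,
    lieBracket_sum_right X e (fun i y => θ i y (Y y)) q]
  · exact Submodule.sum_mem _ fun i _ => H.add_mem (H.smul_mem _ (hH (hq.2.2.1 i)))
      (H.smul_mem _ (hX i))
  · intro i
    exact ((hq.2.1 i).clm_apply hYq.1).differentiableAt (by simp)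
  · exact fun i => (hq.1 i).differentiableAt (by simp)

theorem bracket_mem_swap {X Y : E → E} {q : E} {H : Submodule ℝ E}
    (h : VectorField.lieBracket ℝ X Y q ∈ H) : VectorField.lieBracket ℝ Y X q ∈ H := by
  rw [VectorField.lieBracket_swap]; exact H.neg_mem h

/-- If all brackets of frame elements lie in `H ≥ G q` then all brackets of sections do. -/
theorem bracket_mem_of_frame₂ {ι : Type} [Fintype ι] {G : E → Submodule ℝ E} {e : ι → E → E}
    {θ : ι → E → (E →L[ℝ] ℝ)} {q : E} (hfr : ∀ᶠ x in 𝓝 q, FrAt G e θ x)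
    (H : Submodule ℝ E) (hH : G q ≤ H)
    (he : ∀ i j, VectorField.lieBracket ℝ (e i) (e j) q ∈ H) {X Y : E → E} (hX : Sec G X q)
    (hY : Sec G Y q) :
    VectorField.lieBracket ℝ X Y q ∈ H := by
  apply bracket_mem_of_frame hfr H hH X _ hY
  intro i
  apply bracket_mem_swap
  exact bracket_mem_of_frame hfr H hH (e i) (fun j => he i j) hX

/-- Any field of subspaces of constant rank with enough sections has local frames. -/
theorem exists_frame_fin (G : E → Submodule ℝ E) (q : E) (r : ℕ)
    (hr : ∀ᶠ x in 𝓝 q, Module.finrank ℝ (G x) = r)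
    (hs : ∀ v ∈ G q, ∃ X, Sec G X q ∧ X q = v) :
    ∃ (e : Fin r → E → E) (θ : Fin r → E → (E →L[ℝ] ℝ)), (∀ i, Sec G (e i) q) ∧
      (∀ᶠ x in 𝓝 q, FrAt G e θ x ∧ (∀ v, (∀ i, θ i x v = 0) ↔ ∀ i, θ i q v = 0)) := by
  let b := Module.finBasisOfFinrankEq ℝ (G q) hr.self_of_nhds
  choose e he1 he2 using fun i => hs (b i) (b i).2
  have hli : LinearIndependent ℝ (fun i => e i q) := by
    simp only [he2]
    exact b.linearIndependent.map' (G q).subtype (Submodule.ker_subtype _)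
  obtain ⟨θ, hθ⟩ := exists_frame G e q (by simpa using hr) he1 hli
  exact ⟨e, θ, he1, hθ⟩

theorem FrAt.sec {ι : Type} [Fintype ι] {G : E → Submodule ℝ E} {e : ι → E → E}
    {θ : ι → E → (E →L[ℝ] ℝ)} {q : E} (hfr : ∀ᶠ x in 𝓝 q, FrAt G e θ x) (i : ι) :
    Sec G (e i) q := hfr.mono fun _ hx => ⟨hx.1 i, hx.2.2.1 i⟩

end Frames

end

noncomputable section
open Set Filter Topology
open scoped ContDiff
set_option linter.unusedSectionVars false
set_option linter.deprecated false

section GouDef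
variable {E : Type} [NormedAddCommGroup E] [NormedSpace ℝ E] [FiniteDimensional ℝ E]

/-- `X` is (near `q`) a characteristic field of `G`. -/
def Chr (G : E → Submodule ℝ E) (X : E → E) (q : E) : Prop :=
  ∀ᶠ x in 𝓝 q, ∀ Y, Sec G Y x → VectorField.lieBracket ℝ X Y x ∈ G x

/-- A Goursat flag with compatible drift on the open set `O`. -/
structure Gou (n : ℕ) (O : Set E) (G : ℕ → E → Submodule ℝ E) (f : E → E) : Prop where
  opn : IsOpen O
  fr : Module.finrank ℝ E = n
  smf : ∀ x ∈ O, ContDiffAt ℝ ∞ f x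
  rank : ∀ k, k + 2 ≤ n → ∀ q ∈ O, Module.finrank ℝ (G k q) = k + 2
  sec : ∀ k, k + 2 ≤ n → ∀ q ∈ O, ∀ v ∈ G k q, ∃ X, Sec (G k) X q ∧ X q = v
  mono : ∀ k, k + 3 ≤ n → ∀ q ∈ O, G k q ≤ G (k + 1) q
  brk : ∀ k, k + 3 ≤ n → ∀ q ∈ O, ∀ X Y, Sec (G k) X q → Sec (G k) Y q →
    VectorField.lieBracket ℝ X Y q ∈ G (k + 1) q
  ninv : ∀ k, k + 3 ≤ n → ∀ q ∈ O, ∃ X Y, Sec (G k) X q ∧ Sec (G k) Y q ∧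
    VectorField.lieBracket ℝ X Y q ∉ G k q
  drift : ∀ k, 1 ≤ k → k + 3 ≤ n → ∀ q ∈ O, ∀ X, Sec (G k) X q → Chr (G k) X q →
    VectorField.lieBracket ℝ f X q ∈ G k q

variable {n : ℕ} {O : Set E} {G : ℕ → E → Submodule ℝ E} {f : E → E}

theorem Sec.nhds {G : E → Submodule ℝ E} {X : E → E} {q : E} (h : Sec G X q) :
    ∀ᶠ x in 𝓝 q, Sec G X x := eventually_eventually_nhds.2 h

theorem Chr.nhds {G : E → Submodule ℝ E} {X : E → E} {q : E} (h : Chr G X q) :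
    ∀ᶠ x in 𝓝 q, Chr G X x := eventually_eventually_nhds.2 h

theorem chr_of_frame {ι : Type} [Fintype ι] {G : E → Submodule ℝ E} {e : ι → E → E}
    {θ : ι → E → (E →L[ℝ] ℝ)} {q : E} (hfr : ∀ᶠ x in 𝓝 q, FrAt G e θ x) {X : E → E}
    (hX : ∀ᶠ x in 𝓝 q, ∀ i, VectorField.lieBracket ℝ X (e i) x ∈ G x) : Chr G X q := by
  filter_upwards [eventually_eventually_nhds.2 hfr, hX] with x h1 h2 Y hY
  exact bracket_mem_of_frame h1 _ le_rfl X h2 hY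

theorem Gou.nhds (h : Gou n O G f) {q : E} (hq : q ∈ O) : ∀ᶠ x in 𝓝 q, x ∈ O :=
  h.opn.mem_nhds hq

theorem Gou.frame (h : Gou n O G f) {k : ℕ} (hk : k + 2 ≤ n) {q : E} (hq : q ∈ O) :
    ∃ (e : Fin (k + 2) → E → E) (θ : Fin (k + 2) → E → (E →L[ℝ] ℝ)), (∀ i, Sec (G k) (e i) q) ∧
      (∀ᶠ x in 𝓝 q, FrAt (G k) e θ x ∧ (∀ v, (∀ i, θ i x v = 0) ↔ ∀ i, θ i q v = 0)) :=
  exists_frame_fin (G k) q (k + 2) ((h.nhds hq).mono fun x hx => h.rank k hk x hx)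
    (h.sec k hk q hq)

theorem Gou.bracket_sec (h : Gou n O G f) {k : ℕ} (hk : k + 3 ≤ n) {q : E} (hq : q ∈ O)
    {X Y : E → E} (hX : Sec (G k) X q) (hY : Sec (G k) Y q) :
    Sec (G (k + 1)) (VectorField.lieBracket ℝ X Y) q := by
  filter_upwards [Sec.bracket_smooth (hX.mono fun _ h => h.1) (hY.mono fun _ h => h.1),
    h.nhds hq, hX.nhds, hY.nhds] with x h1 h2 h3 h4
  exact ⟨h1, h.brk k hk x h2 X Y h3 h4⟩

theorem Gou.mono_sec (h : Gou n O G f) {k : ℕ} (hk : k + 3 ≤ n) {q : E} (hq : q ∈ O)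
    {X : E → E} (hX : Sec (G k) X q) : Sec (G (k + 1)) X q := by
  filter_upwards [h.nhds hq, hX] with x h1 h2
  exact ⟨h2.1, h.mono k hk x h1 h2.2⟩

/-- A frame of `G k` extends by one bracket to a frame of `G (k+1)`. -/
theorem Gou.extend (h : Gou n O G f) {k : ℕ} (hk : k + 3 ≤ n) {q : E} (hq : q ∈ O)
    {e : Fin (k + 2) → E → E} {θ : Fin (k + 2) → E → (E →L[ℝ] ℝ)}
    (hfr : ∀ᶠ x in 𝓝 q, FrAt (G k) e θ x) :
    ∃ i j, VectorField.lieBracket ℝ (e i) (e j) q ∉ G k q := by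
  by_contra! hcon
  obtain ⟨X, Y, hX, hY, hXY⟩ := h.ninv k hk q hq
  exact hXY (bracket_mem_of_frame₂ hfr _ le_rfl hcon hX hY)

theorem Gou.extend_frame (h : Gou n O G f) {k : ℕ} (hk : k + 3 ≤ n) {q : E} (hq : q ∈ O)
    {ι : Type} [Fintype ι] [DecidableEq ι] (hι : Fintype.card ι = k + 2)
    {e : ι → E → E} {θ : ι → E → (E →L[ℝ] ℝ)}
    (hfr : ∀ᶠ x in 𝓝 q, FrAt (G k) e θ x) {B : E → E} (hB : Sec (G (k + 1)) B q)
    (hBq : B q ∉ G k q) :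
    ∃ θ' : Option ι → E → (E →L[ℝ] ℝ),
      ∀ᶠ x in 𝓝 q, FrAt (G (k + 1)) (fun o => o.elim B e) θ' x := by
  have hq' := hfr.self_of_nhds
  obtain ⟨θ', hθ'⟩ := exists_frame (G (k + 1)) (fun o : Option ι => o.elim B e) q
    (by
      filter_upwards [h.nhds hq] with x hx
      rw [h.rank (k + 1) (by omega) x hx, Fintype.card_option, hι])
    (by
      rintro (_ | i)
      · exact hB
      · exact h.mono_sec hk hq (FrAt.sec hfr i))
    (by
      rw [linearIndependent_option]
      refine ⟨hq'.2.2.2.2, fun hmem => hBq ?_⟩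
      refine Submodule.span_le.2 ?_ hmem
      rintro _ ⟨i, rfl⟩
      exact hq'.2.2.1 i)
  exact ⟨θ', hθ'.mono fun x hx => hx.1⟩

/-- Propagation of the characteristic property along the flag. -/
theorem Gou.chr_succ (h : Gou n O G f) {k : ℕ} (hk : k + 3 ≤ n) {q : E} (hq : q ∈ O)
    {X : E → E} (hXs : ∀ᶠ x in 𝓝 q, ContDiffAt ℝ ∞ X x) (hX : Chr (G k) X q) :
    Chr (G (k + 1)) X q := by
  obtain ⟨e, θ, he, hfr'⟩ := h.frame (k := k) (by omega) hq
  have hfr := hfr'.mono fun x hx => hx.1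
  obtain ⟨i, j, hij⟩ := h.extend hk hq hfr
  have hB := h.bracket_sec hk hq (he i) (he j)
  obtain ⟨θ', hθ'⟩ := h.extend_frame hk hq (by simp) hfr hB hij
  apply chr_of_frame hθ'
  have hXe : ∀ l, Sec (G k) (VectorField.lieBracket ℝ X (e l)) q := by
    intro l
    filter_upwards [Sec.bracket_smooth hXs ((he l).mono fun _ h => h.1), hX, (he l).nhds]
      with x h1 h2 h3
    exact ⟨h1, h2 _ h3⟩
  filter_upwards [h.nhds hq, eventually_all.2 fun l => (hXe l).nhds,
    eventually_all.2 fun l => (he l).nhds, hXs] with x h1 h2 h3 h4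
  rintro (_ | l)
  · simp only [Option.elim]
    have hsm : ∀ {Y : E → E}, ContDiffAt ℝ ∞ Y x → ContDiffAt ℝ (minSmoothness ℝ 2) Y x :=
      fun hY => hY.of_le (by
        rw [minSmoothness_of_isRCLikeNormedField]; exact WithTop.coe_le_coe.2 (le_top (a := (2 : ℕ∞))))
    rw [VectorField.leibniz_identity_lieBracket le_rfl (hsm h4)
      (hsm (h3 i).self_of_nhds.1) (hsm (h3 j).self_of_nhds.1)]
    exact Submodule.add_mem _ (h.brk k hk x h1 _ _ (h2 i) (h3 j)) (h.brk k hk x h1 _ _ (h3 i) (h2 j))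
  · exact h.mono k hk x h1 (h2 l).self_of_nhds.2

theorem Gou.exists_chr_aux (h : Gou n O G f) (hn : 4 ≤ n) {q : E} (hq : q ∈ O)
    {a b : E → E} (ha : Sec (G 0) a q) (hb : Sec (G 0) b q)
    (hg : VectorField.lieBracket ℝ a b q ∉ G 0 q)
    {e : Fin 2 → E → E} (hea : e 0 = a ∧ e 1 = b ∨ e 0 = b ∧ e 1 = a)
    {θ : Fin 2 → E → (E →L[ℝ] ℝ)}
    (hfr : ∀ᶠ x in 𝓝 q, FrAt (G 0) e θ x)
    (hag : VectorField.lieBracket ℝ a (VectorField.lieBracket ℝ a b) q ∉ G 1 q) :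
    ∃ X, Sec (G 0) X q ∧ X q ≠ 0 ∧ Chr (G 1) X q := by
  set g := VectorField.lieBracket ℝ a b with hgdef
  have hgs : Sec (G 1) g q := h.bracket_sec (by omega) hq ha hb
  obtain ⟨θ1, hθ1⟩ := h.extend_frame (k := 0) (by omega) hq (by simp) hfr hgs hg
  have ha1 : Sec (G 1) a q := h.mono_sec (by omega) hq ha
  have hb1 : Sec (G 1) b q := h.mono_sec (by omega) hq hb
  have hBs : Sec (G 2) (VectorField.lieBracket ℝ a g) q := h.bracket_sec (by omega) hq ha1 hgs
  have hbg : Sec (G 2) (VectorField.lieBracket ℝ b g) q := h.bracket_sec (by omega) hq hb1 hgs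
  obtain ⟨θ2, hθ2⟩ := h.extend_frame (k := 1) (by omega) hq (by simp) hθ1 hBs hag
  let c : E → ℝ := fun x => θ2 none x (VectorField.lieBracket ℝ b g x)
  have hc : ∀ᶠ x in 𝓝 q, ContDiffAt ℝ ∞ c x := by
    filter_upwards [hθ2, hbg] with x h1 h2
    exact (h1.2.1 none).clm_apply h2.1
  have hX : Sec (G 0) (fun x => b x - c x • a x) q := by
    filter_upwards [ha, hb, hc] with x h1 h2 h3
    exact ⟨h2.1.sub (h3.smul h1.1), Submodule.sub_mem _ h2.2 (Submodule.smul_mem _ _ h1.2)⟩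
  refine ⟨_, hX, ?_, ?_⟩
  · have hli := hfr.self_of_nhds.2.2.2.2
    rw [Fintype.linearIndependent_iff] at hli
    intro h0
    rcases hea with ⟨h1, h2⟩ | ⟨h1, h2⟩
    · have := hli ![-c q, 1] (by
        simp only [Fin.sum_univ_two, h1, h2]
        simpa [add_comm, sub_eq_add_neg] using h0) 1
      simp at this
    · have := hli ![1, -c q] (by
        simp only [Fin.sum_univ_two, h1, h2]
        simpa [add_comm, sub_eq_add_neg] using h0) 0
      simp at this
  · apply chr_of_frame hθ1
    have hX1 := h.mono_sec (k := 0) (by omega) hq hX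
    filter_upwards [h.nhds hq, hX.nhds, (FrAt.sec hfr 0).nhds, (FrAt.sec hfr 1).nhds, hθ2, hθ1, ha,
      hb, hc, hgs, hbg] with x hxO hXx he0 he1 h2 h1 hax hbx hcx hgx hbgx
    rintro (_ | l)
    · simp only [Option.elim]
      have hd : ∀ {F : Type} [NormedAddCommGroup F] [NormedSpace ℝ F] {Y : E → F},
        ContDiffAt ℝ ∞ Y x → DifferentiableAt ℝ Y x := fun hY => hY.differentiableAt (by simp)
      have hexp := h2.2.2.2.1 _ hbgx.2
      rw [Fintype.sum_option] at hexp
      have e1 : VectorField.lieBracket ℝ (fun x => b x - c x • a x) g x =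
          VectorField.lieBracket ℝ b g x - c x • VectorField.lieBracket ℝ a g x
            + fderiv ℝ c x (g x) • a x := by
        simp only [VectorField.lieBracket]
        rw [fderiv_fun_sub (hd hbx.1) ((hd hcx).fun_smul (hd hax.1)), fderiv_fun_smul (hd hcx) (hd hax.1)]
        simp only [map_sub, map_smul, ContinuousLinearMap.sub_apply, ContinuousLinearMap.add_apply,
          ContinuousLinearMap.smul_apply, ContinuousLinearMap.smulRight_apply, smul_sub]
        abel
      rw [e1]
      refine Submodule.add_mem _ ?_ (Submodule.smul_mem _ _ (h.mono 0 (by omega) x hxO hax.2))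
      rw [← hexp]
      simp only [Option.elim, c, add_sub_cancel_left]
      exact Submodule.sum_mem _ fun o _ => Submodule.smul_mem _ _ (h1.2.2.1 o)
    · refine h.brk 0 (by omega) x hxO _ _ hXx ?_
      fin_cases l
      · exact he0
      · exact he1

/-- Existence of a common characteristic field in `G 0`. -/
theorem Gou.exists_chr (h : Gou n O G f) (hn : 3 ≤ n) {q : E} (hq : q ∈ O) :
    ∃ X, Sec (G 0) X q ∧ X q ≠ 0 ∧ ∀ k, 1 ≤ k → k + 2 ≤ n → Chr (G k) X q := by
  obtain ⟨e, θ, he, hfr'⟩ := h.frame (k := 0) (by omega) hq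
  have hfr := hfr'.mono fun x hx => hx.1
  suffices hs : ∃ X, Sec (G 0) X q ∧ X q ≠ 0 ∧ Chr (G 1) X q by
    obtain ⟨X, hX, hX0, hX1⟩ := hs
    refine ⟨X, hX, hX0, fun k hk => ?_⟩
    induction k, hk using Nat.le_induction with
    | base => exact fun _ => hX1
    | succ k hk ih => 
      intro hk2
      exact h.chr_succ (by omega) hq (hX.mono fun _ h => h.1) (ih (by omega))
  rcases Nat.lt_or_ge 3 n with h4 | h3
  · have h01 : VectorField.lieBracket ℝ (e 0) (e 1) q ∉ G 0 q := by
      intro hmem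
      obtain ⟨i, j, hij⟩ := h.extend (k := 0) (by omega) hq hfr
      apply hij
      have h00 : ∀ l, VectorField.lieBracket ℝ (e l) (e l) q ∈ G 0 q := by
        intro l; simp [VectorField.lieBracket]
      fin_cases i <;> fin_cases j
      · exact h00 0
      · exact hmem
      · exact bracket_mem_swap hmem
      · exact h00 1
    have h10 : VectorField.lieBracket ℝ (e 1) (e 0) q ∉ G 0 q :=
      fun hmem => h01 (bracket_mem_swap hmem)
    have hsw : VectorField.lieBracket ℝ (e 1) (e 0) = fun x => -VectorField.lieBracket ℝ (e 0) (e 1) x :=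
      funext fun x => VectorField.lieBracket_swap
    by_cases hA : VectorField.lieBracket ℝ (e 0) (VectorField.lieBracket ℝ (e 0) (e 1)) q ∈ G 1 q
    · refine h.exists_chr_aux h4 hq (he 1) (he 0) h10 (e := e) (Or.inr ⟨rfl, rfl⟩) hfr ?_
      intro hB
      have hB' : VectorField.lieBracket ℝ (e 1) (VectorField.lieBracket ℝ (e 0) (e 1)) q ∈ G 1 q := by
        rw [hsw] at hB
        have : VectorField.lieBracket ℝ (e 1) (fun x => -VectorField.lieBracket ℝ (e 0) (e 1) x) q =
            - VectorField.lieBracket ℝ (e 1) (VectorField.lieBracket ℝ (e 0) (e 1)) q := by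
          have hN := fderiv_fun_neg (𝕜 := ℝ) (f := VectorField.lieBracket ℝ (e 0) (e 1)) (x := q)
          generalize VectorField.lieBracket ℝ (e 0) (e 1) = B at hN
          simp only [VectorField.lieBracket, hN, map_neg, ContinuousLinearMap.neg_apply]
          abel
        rw [this] at hB
        simpa using Submodule.neg_mem _ hB
      have hgs := h.bracket_sec (k := 0) (by omega) hq (he 0) (he 1)
      obtain ⟨θ1, hθ1⟩ := h.extend_frame (k := 0) (by omega) hq (by simp) hfr hgs h01
      obtain ⟨X, Y, hX, hY, hXY⟩ := h.ninv 1 (by omega) q hq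
      refine hXY (bracket_mem_of_frame₂ hθ1 _ le_rfl ?_ hX hY)
      have hll : ∀ i j, VectorField.lieBracket ℝ (e i) (e j) q ∈ G 1 q := fun i j =>
        h.brk 0 (by omega) q hq _ _ (he i) (he j)
      have hlg : ∀ i, VectorField.lieBracket ℝ (e i) (VectorField.lieBracket ℝ (e 0) (e 1)) q
          ∈ G 1 q := by
        intro i
        fin_cases i
        · exact hA
        · exact hB'
      rintro (_ | i) (_ | j)
      · simp [VectorField.lieBracket]
      · exact bracket_mem_swap (hlg j)
      · exact hlg i
      · exact hll i j
    · exact h.exists_chr_aux h4 hq (he 0) (he 1) h01 (e := e) (Or.inl ⟨rfl, rfl⟩) hfr hA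
  · have hn3 : n = 3 := by omega
    refine ⟨e 0, he 0, ?_, ?_⟩
    · exact hfr.self_of_nhds.2.2.2.2.ne_zero 0
    · filter_upwards [h.nhds hq] with x hx Y _
      have : G 1 x = ⊤ := by
        apply Submodule.eq_top_of_finrank_eq
        rw [h.rank 1 (by omega) x hx, h.fr, hn3]
      rw [this]; trivial

end GouDef

end

noncomputable section
open Set Filter Topology
open scoped ContDiff
set_option linter.unusedSectionVars false
set_option linter.deprecated false

section Pull
variable {E F : Type} [NormedAddCommGroup E] [NormedSpace ℝ E] [FiniteDimensional ℝ E]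
  [NormedAddCommGroup F] [NormedSpace ℝ F] [FiniteDimensional ℝ F]

/-- The triangular normal form at some point of `O`. -/
def Tri (n : ℕ) (O : Set E) (G0 : E → Submodule ℝ E) (f : E → E) : Prop :=
  ∃ q ∈ O, ∃ (z : ℕ → E → ℝ) (t : E → ℝ) (Φ : (j : ℕ) → (Fin (j + 2) → ℝ) × ℝ → ℝ),
    ∀ᶠ x in 𝓝 q, (∀ j, j + 2 ≤ n → ContDiffAt ℝ ∞ (z j) x) ∧ ContDiffAt ℝ ∞ t x ∧
      (∀ w, (∀ j, j + 2 ≤ n → fderiv ℝ (z j) x w = 0) → fderiv ℝ t x w = 0 → w = 0) ∧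
      (∀ j, j + 3 ≤ n → ContDiffAt ℝ ∞ (Φ j) (fun i => z i x, t x) ∧
        ∀ w ∈ G0 x, fderiv ℝ (z j) x (f x + w) =
          Φ j (fun i => z i x, t x) + z (j + 1) x * fderiv ℝ t x (f x + w))

/-- Smooth local diffeomorphisms. -/
structure Dif (κ : OpenPartialHomeomorph F E) : Prop where
  sm : ∀ z ∈ κ.source, ContDiffAt ℝ ∞ κ z
  inv : ∀ z ∈ κ.source, (fderiv ℝ κ z).IsInvertible
  sms : ∀ y ∈ κ.target, ContDiffAt ℝ ∞ κ.symm y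

/-- Pull-back of a field of subspaces. -/
def pbG (κ : F → E) (G : E → Submodule ℝ E) (z : F) : Submodule ℝ F :=
  (G (κ z)).comap (fderiv ℝ κ z : F →ₗ[ℝ] E)

theorem mem_pbG {κ : F → E} {G : E → Submodule ℝ E} {z v : F} :
    v ∈ pbG κ G z ↔ fderiv ℝ κ z v ∈ G (κ z) := Iff.rfl

variable {κ : OpenPartialHomeomorph F E}

theorem Dif.src (hκ : Dif κ) {z : F} (hz : z ∈ κ.source) : ∀ᶠ w in 𝓝 z, w ∈ κ.source :=
  κ.open_source.mem_nhds hz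

theorem Dif.tendsto (hκ : Dif κ) {z : F} (hz : z ∈ κ.source) : Tendsto κ (𝓝 z) (𝓝 (κ z)) :=
  κ.continuousAt hz

theorem Dif.pb_smooth (hκ : Dif κ) {X : E → E} {z : F} (hz : z ∈ κ.source) (hX : ContDiffAt ℝ ∞ X (κ z)) :
    ContDiffAt ℝ ∞ (VectorField.pullback ℝ κ X) z := by
  have h1 : ContDiffAt ℝ ∞ (fderiv ℝ κ) z := (hκ.sm z hz).fderiv_right (by simp)
  have h2 : ContDiffAt ℝ ∞ (fun w => (fderiv ℝ κ w).inverse) z :=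
    (hκ.inv z hz).contDiffAt_map_inverse.comp z h1
  exact h2.clm_apply (hX.comp z (hκ.sm z hz))

theorem Dif.pb_apply (hκ : Dif κ) {X : E → E} {z : F} (hz : z ∈ κ.source) :
    fderiv ℝ κ z (VectorField.pullback ℝ κ X z) = X (κ z) :=
  (hκ.inv z hz).self_apply_inverse _

theorem Dif.pb_sec (hκ : Dif κ) {G : E → Submodule ℝ E} {X : E → E} {z : F} (hz : z ∈ κ.source)
    (hX : Sec G X (κ z)) : Sec (pbG κ G) (VectorField.pullback ℝ κ X) z := by
  filter_upwards [hκ.src hz, (hκ.tendsto hz).eventually hX] with w h1 h2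
  refine ⟨hκ.pb_smooth h1 h2.1, ?_⟩
  rw [mem_pbG, hκ.pb_apply h1]; exact h2.2

theorem Dif.bracket (hκ : Dif κ) {X Y : E → E} {z : F} (hz : z ∈ κ.source)
    (hX : ContDiffAt ℝ ∞ X (κ z)) (hY : ContDiffAt ℝ ∞ Y (κ z)) :
    fderiv ℝ κ z (VectorField.lieBracket ℝ (VectorField.pullback ℝ κ X)
      (VectorField.pullback ℝ κ Y) z) = VectorField.lieBracket ℝ X Y (κ z) := by
  rw [← VectorField.pullback_lieBracket (n := ∞) _ (hκ.sm z hz) (hX.differentiableAt (by simp))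
    (hY.differentiableAt (by simp)), hκ.pb_apply hz]
  rw [minSmoothness_of_isRCLikeNormedField]; exact WithTop.coe_le_coe.2 (le_top (a := (2 : ℕ∞)))

/-- Every section of the pull-back is the pull-back of a section. -/
theorem Dif.push_sec (hκ : Dif κ) {G : E → Submodule ℝ E} {X' : F → F} {z : F} (hz : z ∈ κ.source)
    (hX : Sec (pbG κ G) X' z) :
    ∃ X, Sec G X (κ z) ∧ X' =ᶠ[𝓝 z] VectorField.pullback ℝ κ X := by
  refine ⟨fun y => fderiv ℝ κ (κ.symm y) (X' (κ.symm y)), ?_, ?_⟩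
  · have h1 : Tendsto κ.symm (𝓝 (κ z)) (𝓝 z) := by
      have := κ.continuousAt_symm (κ.map_source hz)
      rwa [ContinuousAt, κ.left_inv hz] at this
    filter_upwards [κ.open_target.mem_nhds (κ.map_source hz), h1.eventually hX] with y h2 h3
    refine ⟨?_, ?_⟩
    · have h4 : ContDiffAt ℝ ∞ (fun w => fderiv ℝ κ w (X' w)) (κ.symm y) :=
        ((hκ.sm _ (κ.map_target h2)).fderiv_right (m := ∞) (by simp)).clm_apply h3.1
      exact ContDiffAt.comp y h4 (hκ.sms y h2)
    · have h5 := h3.2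
      rw [mem_pbG, κ.right_inv h2] at h5
      exact h5
  · filter_upwards [hκ.src hz] with w hw
    simp only [VectorField.pullback]
    rw [κ.left_inv hw, (hκ.inv w hw).inverse_apply_self]

theorem Dif.gou (hκ : Dif κ) {n : ℕ} {O : Set E} {G : ℕ → E → Submodule ℝ E} {f : E → E} (h : Gou n O G f)
    (hO : κ.target ⊆ O) (hF : Module.finrank ℝ F = n) :
    Gou n κ.source (fun k => pbG κ (G k)) (VectorField.pullback ℝ κ f) := by
  have hsO : ∀ z ∈ κ.source, κ z ∈ O := fun z hz => hO (κ.map_source hz)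
  have hbr : ∀ k z, z ∈ κ.source → ∀ X' Y' X Y, Sec (G k) X (κ z) → Sec (G k) Y (κ z) →
      X' =ᶠ[𝓝 z] VectorField.pullback ℝ κ X → Y' =ᶠ[𝓝 z] VectorField.pullback ℝ κ Y →
      fderiv ℝ κ z (VectorField.lieBracket ℝ X' Y' z) = VectorField.lieBracket ℝ X Y (κ z) := by
    intro k z hz X' Y' X Y hX hY h1 h2
    rw [h1.lieBracket_vectorField_eq h2, hκ.bracket hz hX.self_of_nhds.1 hY.self_of_nhds.1]
  refine ⟨κ.open_source, hF, ?_, ?_, ?_, ?_, ?_, ?_, ?_⟩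
  · exact fun z hz => hκ.pb_smooth hz (h.smf _ (hsO z hz))
  · intro k hk z hz
    obtain ⟨e, he⟩ := hκ.inv z hz
    have h1 : pbG κ (G k) z = (G k (κ z)).map (e.symm.toLinearEquiv : E →ₗ[ℝ] F) := by
      rw [pbG, ← he]
      ext v
      simp only [Submodule.mem_comap, Submodule.mem_map]
      constructor
      · intro hv
        exact ⟨e v, hv, by simp⟩
      · rintro ⟨y, hy, rfl⟩
        simpa using hy
    rw [h1, LinearEquiv.finrank_map_eq, h.rank k hk _ (hsO z hz)]
  · intro k hk z hz v hv
    obtain ⟨X, hX, hXv⟩ := h.sec k hk _ (hsO z hz) _ (mem_pbG.1 hv)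
    refine ⟨_, hκ.pb_sec hz hX, ?_⟩
    rw [VectorField.pullback, hXv, (hκ.inv z hz).inverse_apply_self]
  · exact fun k hk z hz v hv => h.mono k hk _ (hsO z hz) hv
  · intro k hk z hz X' Y' hX' hY'
    obtain ⟨X, hX, hXe⟩ := hκ.push_sec hz hX'
    obtain ⟨Y, hY, hYe⟩ := hκ.push_sec hz hY'
    rw [mem_pbG, hbr k z hz X' Y' X Y hX hY hXe hYe]
    exact h.brk k hk _ (hsO z hz) X Y hX hY
  · intro k hk z hz
    obtain ⟨X, Y, hX, hY, hXY⟩ := h.ninv k hk _ (hsO z hz)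
    refine ⟨_, _, hκ.pb_sec hz hX, hκ.pb_sec hz hY, ?_⟩
    rw [mem_pbG, hκ.bracket hz hX.self_of_nhds.1 hY.self_of_nhds.1]
    exact hXY
  · intro k hk1 hk z hz X' hX' hchr
    obtain ⟨X, hX, hXe⟩ := hκ.push_sec hz hX'
    rw [mem_pbG, (EventuallyEq.refl _ _).lieBracket_vectorField_eq hXe,
      hκ.bracket hz (h.smf _ (hsO z hz)) hX.self_of_nhds.1]
    refine h.drift k hk1 hk _ (hsO z hz) X hX ?_
    have h1 : Tendsto κ.symm (𝓝 (κ z)) (𝓝 z) := by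
      have := κ.continuousAt_symm (κ.map_source hz)
      rwa [ContinuousAt, κ.left_inv hz] at this
    filter_upwards [κ.open_target.mem_nhds (κ.map_source hz), h1.eventually hchr, hX.nhds,
      h1.eventually (eventually_eventually_nhds.2 hXe)] with y hy hc hXy hXey Y hY
    have hw := κ.map_target hy
    have e1 := κ.right_inv hy
    rw [← e1] at hY hXy
    have h2 := hc _ (hκ.pb_sec hw hY)
    rw [mem_pbG, hbr k _ hw _ _ X Y hXy hY hXey (EventuallyEq.refl _ _), e1] at h2
    exact h2

theorem Dif.tri (hκ : Dif κ) {n : ℕ} {O : Set E} {G0 : E → Submodule ℝ E} {f : E → E}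
    (hO : κ.target ⊆ O) (h : Tri n κ.source (pbG κ G0) (VectorField.pullback ℝ κ f)) :
    Tri n O G0 f := by
  obtain ⟨q, hq, z, t, Φ, hev⟩ := h
  refine ⟨κ q, hO (κ.map_source hq), fun j y => z j (κ.symm y), fun y => t (κ.symm y), Φ, ?_⟩
  have h1 : Tendsto κ.symm (𝓝 (κ q)) (𝓝 q) := by
    have := κ.continuousAt_symm (κ.map_source hq)
    rwa [ContinuousAt, κ.left_inv hq] at this
  filter_upwards [κ.open_target.mem_nhds (κ.map_source hq), h1.eventually hev] with y hy hx
  obtain ⟨hz, ht, hinj, hΦ⟩ := hx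
  have hsy : DifferentiableAt ℝ κ.symm y := (hκ.sms y hy).differentiableAt (by simp)
  have hfd : ∀ g : F → ℝ, ContDiffAt ℝ ∞ g (κ.symm y) → ∀ w,
      fderiv ℝ (fun y => g (κ.symm y)) y w = fderiv ℝ g (κ.symm y) (fderiv ℝ κ.symm y w) := by
    intro g hg w
    have := fderiv_comp y (hg.differentiableAt (by simp)) hsy
    rw [show (fun y => g (κ.symm y)) = g ∘ κ.symm from rfl, this]; rfl
  have hid : ∀ w, fderiv ℝ κ (κ.symm y) (fderiv ℝ κ.symm y w) = w := by
    intro w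
    have h2 : HasFDerivAt (fun y => κ (κ.symm y)) ((fderiv ℝ κ (κ.symm y)).comp (fderiv ℝ κ.symm y)) y :=
      HasFDerivAt.comp y ((hκ.sm _ (κ.map_target hy)).differentiableAt (by simp)).hasFDerivAt
        hsy.hasFDerivAt
    have h3 : HasFDerivAt (fun y => κ (κ.symm y)) (ContinuousLinearMap.id ℝ E) y := by
      refine (hasFDerivAt_id y).congr_of_eventuallyEq ?_
      filter_upwards [κ.open_target.mem_nhds hy] with u hu
      exact κ.right_inv hu
    exact congrArg (fun A => A w) (h2.unique h3)
  refine ⟨fun j hj => (hz j hj).comp y (hκ.sms y hy), ht.comp y (hκ.sms y hy), ?_, ?_⟩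
  · intro w hw1 hw2
    have : fderiv ℝ κ.symm y w = 0 := by
      apply hinj
      · intro j hj; rw [← hfd _ (hz j hj)]; exact hw1 j hj
      · rw [← hfd _ ht]; exact hw2
    rw [← hid w, this, map_zero]
  · intro j hj
    refine ⟨(hΦ j hj).1, fun w hw => ?_⟩
    have h4 : fderiv ℝ κ.symm y w ∈ pbG κ G0 (κ.symm y) := by
      rw [mem_pbG, hid, κ.right_inv hy]; exact hw
    have h5 : fderiv ℝ κ.symm y (f y) = VectorField.pullback ℝ κ f (κ.symm y) := by
      rw [VectorField.pullback, κ.right_inv hy]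
      rw [eq_comm, (hκ.inv _ (κ.map_target hy)).inverse_apply_eq, hid]
    rw [hfd _ (hz j (by omega)), hfd _ ht, map_add, h5]
    exact (hΦ j hj).2 _ h4

end Pull

end

noncomputable section
open Set Filter Topology
open scoped ContDiff
set_option linter.unusedSectionVars false
set_option linter.deprecated false

section BoxDef

theorem Gou.restrict {E : Type} [NormedAddCommGroup E] [NormedSpace ℝ E] [FiniteDimensional ℝ E]
    {n : ℕ} {O O' : Set E} {G : ℕ → E → Submodule ℝ E} {f : E → E} (h : Gou n O G f)
    (ho : IsOpen O') (hs : O' ⊆ O) : Gou n O' G f where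
  opn := ho
  fr := h.fr
  smf := fun x hx => h.smf x (hs hx)
  rank := fun k hk q hq => h.rank k hk q (hs hq)
  sec := fun k hk q hq => h.sec k hk q (hs hq)
  mono := fun k hk q hq => h.mono k hk q (hs hq)
  brk := fun k hk q hq => h.brk k hk q (hs hq)
  ninv := fun k hk q hq => h.ninv k hk q (hs hq)
  drift := fun k hk1 hk q hq => h.drift k hk1 hk q (hs hq)

theorem Tri.mono {E : Type} [NormedAddCommGroup E] [NormedSpace ℝ E] [FiniteDimensional ℝ E]
    {n : ℕ} {O O' : Set E} {G : E → Submodule ℝ E} {f : E → E} (h : Tri n O' G f)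
    (hs : O' ⊆ O) : Tri n O G f := by
  obtain ⟨q, hq, hr⟩ := h
  exact ⟨q, hs hq, hr⟩

theorem seg_mem {V : Type} [NormedAddCommGroup V] [NormedSpace ℝ V] [FiniteDimensional ℝ V]
    (W : Submodule ℝ V) (c : ℝ → V) (ε : ℝ)
    (hc : ∀ y, |y| < ε → ∃ c', HasDerivAt c c' y ∧ c' ∈ W) :
    ∀ y, |y| < ε → c y - c 0 ∈ W := by
  intro y hy
  have hε : 0 < ε := lt_of_le_of_lt (abs_nonneg y) hy
  rw [← Subspace.forall_mem_dualAnnihilator_apply_eq_zero_iff]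
  intro φ hφ
  rw [Submodule.mem_dualAnnihilator] at hφ
  let φ' : V →L[ℝ] ℝ := LinearMap.toContinuousLinearMap φ
  have h1 : ∀ y ∈ Metric.ball (0 : ℝ) ε, HasDerivAt (fun y => φ' (c y)) 0 y := by
    intro y hy
    obtain ⟨c', h2, h3⟩ := hc y (by simpa using hy)
    have := φ'.hasFDerivAt.comp_hasDerivAt y h2
    have h4 : φ' c' = 0 := hφ c' h3
    rwa [h4] at this
  have h2 := IsOpen.is_const_of_deriv_eq_zero Metric.isOpen_ball
    (convex_ball (0 : ℝ) ε).isPreconnected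
    (fun y hy => (h1 y hy).differentiableAt.differentiableWithinAt) (fun y hy => (h1 y hy).deriv)
    (show y ∈ Metric.ball (0 : ℝ) ε by simpa using hy) (show (0 : ℝ) ∈ Metric.ball (0 : ℝ) ε by simpa using hε)
  have : φ (c y) = φ (c 0) := h2
  rw [map_sub, this, sub_self]

variable {M : Type} [NormedAddCommGroup M] [NormedSpace ℝ M] [FiniteDimensional ℝ M]

theorem mem_ball_prod {x : M} {y : ℝ} {ε : ℝ} :
    (x, y) ∈ Metric.ball (0 : M × ℝ) ε ↔ x ∈ Metric.ball (0 : M) ε ∧ |y| < ε := by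
  simp [Prod.norm_def]

/-- The constant field along the last coordinate. -/
def dy : M × ℝ → M × ℝ := fun _ => (0, 1)

theorem lieBracket_dy {Y : M × ℝ → M × ℝ} {z : M × ℝ} :
    VectorField.lieBracket ℝ dy Y z = fderiv ℝ Y z (0, 1) := by
  have h : fderiv ℝ (dy : M × ℝ → M × ℝ) z = 0 := (hasFDerivAt_const _ _).fderiv
  simp [VectorField.lieBracket, h, dy]

theorem hasDerivAt_line {V : Type} [NormedAddCommGroup V] [NormedSpace ℝ V] {F : M × ℝ → V}
    {x : M} {y : ℝ} (h : ContDiffAt ℝ ∞ F (x, y)) :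
    HasDerivAt (fun s => F (x, s)) (fderiv ℝ F (x, y) (0, 1)) y := by
  have h1 : HasDerivAt (fun s : ℝ => (x, s)) ((0 : M), (1 : ℝ)) y :=
    (hasDerivAt_const y x).prodMk (hasDerivAt_id y)
  exact (h.differentiableAt (by simp)).hasFDerivAt.comp_hasDerivAt y h1

theorem FrAt.dual {E : Type} [NormedAddCommGroup E] [NormedSpace ℝ E] [FiniteDimensional ℝ E]
    {ι : Type} [Fintype ι] [DecidableEq ι] {G : E → Submodule ℝ E} {e : ι → E → E}
    {θ : ι → E → (E →L[ℝ] ℝ)} {x : E} (h : FrAt G e θ x) (i j : ι) :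
    θ i x (e j x) = if i = j then 1 else 0 := by
  have h1 := h.2.2.2.1 (e j x) (h.2.2.1 j)
  have h2 := h.2.2.2.2
  rw [Fintype.linearIndependent_iff] at h2
  have h3 := h2 (fun i => θ i x (e j x) - if i = j then 1 else 0) (by
    simp only [sub_smul, Finset.sum_sub_distrib, h1]
    simp) i
  linarith

theorem inv_of_chr {ι : Type} [Fintype ι] [DecidableEq ι] {G : M × ℝ → Submodule ℝ (M × ℝ)}
    {e : ι → M × ℝ → M × ℝ} {θ : ι → M × ℝ → (M × ℝ →L[ℝ] ℝ)} {ε : ℝ}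
    (hfr : ∀ z ∈ Metric.ball (0 : M × ℝ) ε, FrAt G e θ z ∧
      (∀ v, (∀ i, θ i z v = 0) ↔ ∀ i, θ i 0 v = 0))
    (hchr : ∀ z ∈ Metric.ball (0 : M × ℝ) ε, ∀ Y, Sec G Y z →
      VectorField.lieBracket ℝ dy Y z ∈ G z) :
    ∀ x y, (x, y) ∈ Metric.ball (0 : M × ℝ) ε → G (x, y) = G (x, 0) := by
  let P : M × ℝ → M × ℝ → M × ℝ := fun w z => ∑ i, θ i z w • e i z
  have hnb : ∀ z ∈ Metric.ball (0 : M × ℝ) ε, ∀ᶠ u in 𝓝 z, u ∈ Metric.ball (0 : M × ℝ) ε :=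
    fun z hz => Metric.isOpen_ball.mem_nhds hz
  have hPs : ∀ w z, z ∈ Metric.ball (0 : M × ℝ) ε → ContDiffAt ℝ ∞ (P w) z := by
    intro w z hz
    refine ContDiffAt.sum fun i _ => ?_
    exact (((hfr z hz).1.2.1 i).clm_apply contDiffAt_const).smul ((hfr z hz).1.1 i)
  have hPm : ∀ w z, z ∈ Metric.ball (0 : M × ℝ) ε → P w z ∈ G z := by
    intro w z hz
    exact Submodule.sum_mem _ fun i _ => Submodule.smul_mem _ _ ((hfr z hz).1.2.2.1 i)
  have hPK : ∀ w z, z ∈ Metric.ball (0 : M × ℝ) ε → ∀ i, θ i 0 (P w z) = θ i 0 w := by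
    intro w z hz
    have : ∀ i, θ i z (P w z - w) = 0 := by
      intro i
      simp only [P, map_sub, map_sum, map_smul, (hfr z hz).1.dual]
      simp
    intro i
    have := ((hfr z hz).2 _).1 this i
    rwa [map_sub, sub_eq_zero] at this
  have hD : ∀ w z, z ∈ Metric.ball (0 : M × ℝ) ε → fderiv ℝ (P w) z (0, 1) = 0 := by
    intro w z hz
    have h1 : fderiv ℝ (P w) z (0, 1) ∈ G z := by
      rw [← lieBracket_dy]
      apply hchr z hz
      filter_upwards [hnb z hz] with u hu
      exact ⟨hPs w u hu, hPm w u hu⟩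
    have h2 : ∀ i, θ i 0 (fderiv ℝ (P w) z (0, 1)) = 0 := by
      intro i
      have h3 : HasFDerivAt (fun u => θ i 0 (P w u)) ((θ i 0).comp (fderiv ℝ (P w) z)) z :=
        (θ i 0).hasFDerivAt.comp z ((hPs w z hz).differentiableAt (by simp)).hasFDerivAt
      have h4 : HasFDerivAt (fun u => θ i 0 (P w u)) (0 : M × ℝ →L[ℝ] ℝ) z := by
        refine (hasFDerivAt_const (θ i 0 w) z).congr_of_eventuallyEq ?_
        filter_upwards [hnb z hz] with u hu
        exact hPK w u hu i
      exact congrArg (fun A => A (0, 1)) (h3.unique h4)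
    have h5 := ((hfr z hz).2 _).2 h2
    rw [← (hfr z hz).1.2.2.2.1 _ h1]
    simp [h5]
  intro x y hxy
  have hx := mem_ball_prod.1 hxy
  have hx0 : (x, (0 : ℝ)) ∈ Metric.ball (0 : M × ℝ) ε :=
    mem_ball_prod.2 ⟨hx.1, by simpa using lt_of_le_of_lt (abs_nonneg y) hx.2⟩
  have hc : ∀ w, P w (x, y) = P w (x, 0) := by
    intro w
    have := seg_mem (⊥ : Submodule ℝ (M × ℝ)) (fun s => P w (x, s)) ε (fun s hs =>
      ⟨_, hasDerivAt_line (hPs w _ (mem_ball_prod.2 ⟨hx.1, hs⟩)), by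
        rw [hD w _ (mem_ball_prod.2 ⟨hx.1, hs⟩)]; exact Submodule.zero_mem _⟩) y hx.2
    exact sub_eq_zero.1 ((Submodule.mem_bot ℝ).1 this)
  apply le_antisymm
  · intro w hw
    have h1 : P w (x, y) = w := (hfr _ hxy).1.2.2.2.1 w hw
    rw [← h1, hc]
    exact hPm _ _ hx0
  · intro w hw
    have h1 : P w (x, 0) = w := (hfr _ hx0).1.2.2.2.1 w hw
    rw [← h1, ← hc]
    exact hPm _ _ hxy

/-- A Goursat flag in a flow box of a characteristic field. -/
structure Box (m : ℕ) (ε : ℝ) (G : ℕ → M × ℝ → Submodule ℝ (M × ℝ)) (f : M × ℝ → M × ℝ) : Prop where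
  pos : 0 < ε
  gou : Gou (m + 1) (Metric.ball (0 : M × ℝ) ε) G f
  dy0 : ∀ z ∈ Metric.ball (0 : M × ℝ) ε, (0, 1) ∈ G 0 z
  inv : ∀ k, 1 ≤ k → k + 1 ≤ m → ∀ x y, (x, y) ∈ Metric.ball (0 : M × ℝ) ε →
    G k (x, y) = G k (x, 0)
  chr : ∀ k, 1 ≤ k → k + 1 ≤ m → ∀ z ∈ Metric.ball (0 : M × ℝ) ε, Chr (G k) dy z

end BoxDef

theorem Gou.exists_box {E : Type} [NormedAddCommGroup E] [NormedSpace ℝ E] [FiniteDimensional ℝ E]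
    {m : ℕ} {O : Set E} {G : ℕ → E → Submodule ℝ E} {f : E → E} (h : Gou (m + 1) O G f)
    (hm : 2 ≤ m) {q : E} (hq : q ∈ O) :
    ∃ M : Submodule ℝ E, Module.finrank ℝ M = m ∧ ∃ κ : OpenPartialHomeomorph (M × ℝ) E, Dif κ ∧
      κ.target ⊆ O ∧ ∃ ε, Metric.ball 0 ε ⊆ κ.source ∧
        Box m ε (fun k => pbG κ (G k)) (VectorField.pullback ℝ κ f) := by
  obtain ⟨X, hX, hX0, hXc⟩ := h.exists_chr (by omega) hq
  have hXc' : ∀ᶠ x in 𝓝 q, ∀ k : Fin (m + 1), 1 ≤ k.1 → k.1 + 1 ≤ m → Chr (G k) X x := by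
    rw [eventually_all]
    intro k
    by_cases hk : 1 ≤ k.1 ∧ k.1 + 1 ≤ m
    · filter_upwards [(hXc k hk.1 (by omega)).nhds] with x hx _ _ using hx
    · filter_upwards with x h1 h2 using absurd ⟨h1, h2⟩ hk
  obtain ⟨M, hM, κ, h0, hκ0, hN, hs, hi, hss, hfl⟩ := flow_box X q (hX.mono fun _ h => h.1) hX0
    {x | x ∈ O ∧ (∀ k : Fin (m + 1), 1 ≤ k.1 → k.1 + 1 ≤ m → Chr (G k) X x) ∧ Sec (G 0) X x}
    ((h.nhds hq).and (hXc'.and hX.nhds))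
  have hκ : Dif κ := ⟨hs, hi, hss⟩
  have hfin : Module.finrank ℝ M = m := by have := h.fr; omega
  have hO : κ.target ⊆ O := fun x hx => (hN hx).1
  have hg := hκ.gou h hO (by rw [Module.finrank_prod, hfin, Module.finrank_self])
  refine ⟨M, hfin, κ, hκ, hO, ?_⟩
  have hpb : ∀ z ∈ κ.source, dy =ᶠ[𝓝 z] VectorField.pullback ℝ κ X := by
    intro z hz
    filter_upwards [hκ.src hz] with w hw
    rw [VectorField.pullback, ← hfl w hw, (hi w hw).inverse_apply_self]; rfl
  have hchr : ∀ k, 1 ≤ k → k + 1 ≤ m → ∀ z ∈ κ.source, ∀ Y, Sec (pbG κ (G k)) Y z →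
      VectorField.lieBracket ℝ dy Y z ∈ pbG κ (G k) z := by
    intro k hk1 hk2 z hz Y hY
    obtain ⟨Y', hY', hYe⟩ := hκ.push_sec hz hY
    have hz' := hN (κ.map_source hz)
    rw [mem_pbG, (hpb z hz).lieBracket_vectorField_eq hYe, hκ.bracket hz hz'.2.2.self_of_nhds.1
      hY'.self_of_nhds.1]
    exact (hz'.2.1 ⟨k, by omega⟩ hk1 hk2).self_of_nhds _ hY'
  have hfrs : ∀ᶠ z in 𝓝 (0 : M × ℝ), z ∈ κ.source ∧ True := by
    filter_upwards [hκ.src h0] with z hz using ⟨hz, trivial⟩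
  have hfrk : ∀ k : Fin (m + 1), ∃ (e : Fin (k + 2) → M × ℝ → M × ℝ)
      (θ : Fin (k + 2) → M × ℝ → (M × ℝ →L[ℝ] ℝ)), 1 ≤ k.1 → k.1 + 1 ≤ m → 
      ∀ᶠ x in 𝓝 (0 : M × ℝ), FrAt (pbG κ (G k)) e θ x ∧ (∀ v, (∀ i, θ i x v = 0) ↔ ∀ i, θ i 0 v = 0) := by
    intro k
    by_cases hk : 1 ≤ k.1 ∧ k.1 + 1 ≤ m
    · obtain ⟨e, θ, _, he⟩ := hg.frame (k := k.1) (by omega) (q := (0 : M × ℝ)) h0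
      exact ⟨e, θ, fun _ _ => he⟩
    · exact ⟨fun _ _ => 0, fun _ _ => 0, fun h1 h2 => absurd ⟨h1, h2⟩ hk⟩
  choose e θ hfr using hfrk
  have hall : ∀ᶠ x in 𝓝 (0 : M × ℝ), x ∈ κ.source ∧ ∀ k : Fin (m + 1), 1 ≤ k.1 → k.1 + 1 ≤ m →
      FrAt (pbG κ (G k)) (e k) (θ k) x ∧ (∀ v, (∀ i, θ k i x v = 0) ↔ ∀ i, θ k i 0 v = 0) := by
    refine (hκ.src h0).and ?_
    rw [eventually_all]
    intro k
    by_cases hk : 1 ≤ k.1 ∧ k.1 + 1 ≤ m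
    · filter_upwards [hfr k hk.1 hk.2] with x hx _ _ using hx
    · filter_upwards with x h1 h2 using absurd ⟨h1, h2⟩ hk
  obtain ⟨ε, hε, hball⟩ := Metric.eventually_nhds_iff_ball.1 hall
  have hsub : Metric.ball 0 ε ⊆ κ.source := fun z hz => (hball z hz).1
  refine ⟨ε, hsub, hε, hg.restrict Metric.isOpen_ball hsub, ?_, ?_, ?_⟩
  · intro z hz
    rw [mem_pbG, hfl z (hsub hz)]
    exact (hN (κ.map_source (hsub hz))).2.2.self_of_nhds.2
  · intro k hk1 hk2
    exact inv_of_chr (fun z hz => (hball z hz).2 ⟨k, by omega⟩ hk1 hk2)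
      (fun z hz => hchr k hk1 hk2 z (hsub hz))
  · intro k hk1 hk2 z hz
    filter_upwards [hκ.src (hsub hz)] with w hw
    exact hchr k hk1 hk2 w hw

end

noncomputable section
open Set Filter Topology
open scoped ContDiff
set_option linter.unusedSectionVars false
set_option linter.deprecated false

section Quot
variable {M : Type} [NormedAddCommGroup M] [NormedSpace ℝ M] [FiniteDimensional ℝ M]

/-- A product of submodules is linearly equivalent to the product of the submodules. -/
def prodEq {M N : Type} [AddCommGroup M] [Module ℝ M] [AddCommGroup N] [Module ℝ N]
    (p : Submodule ℝ M) (q : Submodule ℝ N) : (p.prod q) ≃ₗ[ℝ] p × q where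
  toFun z := (⟨z.1.1, z.2.1⟩, ⟨z.1.2, z.2.2⟩)
  invFun w := ⟨(w.1.1, w.2.1), w.1.2, w.2.2⟩
  map_add' _ _ := rfl
  map_smul' _ _ := rfl
  left_inv _ := rfl
  right_inv _ := rfl

/-- The quotient flag on the transversal. -/
def qG (G : ℕ → M × ℝ → Submodule ℝ (M × ℝ)) (k : ℕ) (x : M) : Submodule ℝ M :=
  (G (k + 1) (x, 0)).comap (LinearMap.inl ℝ M ℝ)

theorem mem_qG {G : ℕ → M × ℝ → Submodule ℝ (M × ℝ)} {k : ℕ} {x v : M} :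
    v ∈ qG G k x ↔ (v, (0 : ℝ)) ∈ G (k + 1) (x, 0) := Iff.rfl

/-- Horizontal lift. -/
def lft (X : M → M) : M × ℝ → M × ℝ := fun z => (X z.1, 0)

theorem lft_fderiv {X : M → M} {z : M × ℝ} (hX : ContDiffAt ℝ ∞ X z.1) (w : M × ℝ) :
    fderiv ℝ (lft X) z w = (fderiv ℝ X z.1 w.1, 0) := by
  have h1 : HasFDerivAt (fun z : M × ℝ => X z.1) ((fderiv ℝ X z.1).comp (ContinuousLinearMap.fst ℝ M ℝ)) z :=
    (hX.differentiableAt (by simp)).hasFDerivAt.comp z hasFDerivAt_fst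
  have h2 := h1.prodMk (hasFDerivAt_const (0 : ℝ) z)
  rw [show lft X = fun z : M × ℝ => (X z.1, (0 : ℝ)) from rfl, h2.fderiv]
  rfl

theorem lft_smooth {X : M → M} {z : M × ℝ} (hX : ContDiffAt ℝ ∞ X z.1) :
    ContDiffAt ℝ ∞ (lft X) z :=
  (hX.comp z contDiffAt_fst).prodMk contDiffAt_const

theorem lft_bracket {X Y : M → M} {z : M × ℝ} (hX : ContDiffAt ℝ ∞ X z.1)
    (hY : ContDiffAt ℝ ∞ Y z.1) : VectorField.lieBracket ℝ (lft X) (lft Y) z =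
      (VectorField.lieBracket ℝ X Y z.1, 0) := by
  simp only [VectorField.lieBracket, lft_fderiv hX, lft_fderiv hY]
  simp [lft]

theorem dy_lft_bracket {X : M → M} {z : M × ℝ} (hX : ContDiffAt ℝ ∞ X z.1) :
    VectorField.lieBracket ℝ dy (lft X) z = 0 := by
  rw [lieBracket_dy, lft_fderiv hX]; simp

theorem hasFDerivAt_slice {F : M × ℝ → M × ℝ} {x : M} (h : ContDiffAt ℝ ∞ F (x, 0)) :
    HasFDerivAt (fun x => (F (x, 0)).1) ((ContinuousLinearMap.fst ℝ M ℝ).comp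
      ((fderiv ℝ F (x, 0)).comp (ContinuousLinearMap.inl ℝ M ℝ))) x := by
  have h1 : HasFDerivAt (fun x : M => (x, (0 : ℝ))) (ContinuousLinearMap.inl ℝ M ℝ) x :=
    (ContinuousLinearMap.inl ℝ M ℝ).hasFDerivAt
  have h2 := (h.differentiableAt (by simp)).hasFDerivAt.comp x h1
  exact (ContinuousLinearMap.fst ℝ M ℝ).hasFDerivAt.comp x h2

theorem slice_smooth {F : M × ℝ → M × ℝ} {x : M} (h : ContDiffAt ℝ ∞ F (x, 0)) :
    ContDiffAt ℝ ∞ (fun x => (F (x, 0)).1) x := by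
  have h1 : ContDiffAt ℝ ∞ (fun x : M => (x, (0 : ℝ))) x := contDiffAt_id.prodMk contDiffAt_const
  have h2 : ContDiffAt ℝ ∞ (fun x => F (x, 0)) x := ContDiffAt.comp x h h1
  exact h2.fst

theorem tendsto_slice (x : M) : Tendsto (fun x : M => (x, (0 : ℝ))) (𝓝 x) (𝓝 (x, 0)) :=
  (Continuous.prodMk continuous_id continuous_const).tendsto x

theorem tendsto_fst' (z : M × ℝ) : Tendsto (fun z : M × ℝ => z.1) (𝓝 z) (𝓝 z.1) :=
  continuous_fst.tendsto z

variable {m : ℕ} {ε : ℝ} {G : ℕ → M × ℝ → Submodule ℝ (M × ℝ)} {f : M × ℝ → M × ℝ}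

theorem Box.zmem (h : Box m ε G f) {x : M} {y : ℝ} (hx : (x, y) ∈ Metric.ball (0 : M × ℝ) ε) :
    (x, (0 : ℝ)) ∈ Metric.ball (0 : M × ℝ) ε :=
  mem_ball_prod.2 ⟨(mem_ball_prod.1 hx).1, by simpa using h.pos⟩

theorem Box.zmem' (h : Box m ε G f) {x : M} (hx : x ∈ Metric.ball (0 : M) ε) :
    (x, (0 : ℝ)) ∈ Metric.ball (0 : M × ℝ) ε :=
  mem_ball_prod.2 ⟨hx, by simpa using h.pos⟩

theorem Box.dyk (h : Box m ε G f) {k : ℕ} (hk : k + 1 ≤ m) {z : M × ℝ} (hz : z ∈ Metric.ball (0 : M × ℝ) ε) :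
    ((0 : M), (1 : ℝ)) ∈ G k z := by
  induction k with
  | zero => exact h.dy0 z hz
  | succ k ih => exact h.gou.mono k (by omega) z hz (ih (by omega))

theorem Box.dy_sec (h : Box m ε G f) {k : ℕ} (hk : k + 1 ≤ m) {z : M × ℝ} (hz : z ∈ Metric.ball (0 : M × ℝ) ε) :
    Sec (G k) dy z := by
  filter_upwards [h.gou.nhds hz] with w hw
  exact ⟨contDiffAt_const, h.dyk hk hw⟩

theorem Box.mem_iff (h : Box m ε G f) {k : ℕ} (hk : k + 2 ≤ m) {x v : M} {y s : ℝ}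
    (hz : (x, y) ∈ Metric.ball (0 : M × ℝ) ε) : (v, s) ∈ G (k + 1) (x, y) ↔ v ∈ qG G k x := by
  rw [h.inv (k + 1) (by omega) (by omega) x y hz, mem_qG]
  have h1 := h.dyk (k := k + 1) (by omega) (h.zmem hz)
  have h2 : ((v, s) : M × ℝ) = (v, 0) + s • (0, 1) := by simp
  rw [h2, Submodule.add_mem_iff_left _ (Submodule.smul_mem _ _ h1)]

theorem Box.res_sec (h : Box m ε G f) {k : ℕ} (hk : k + 2 ≤ m) {x : M} (hx : x ∈ Metric.ball (0 : M) ε)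
    {Y : M × ℝ → M × ℝ} (hY : Sec (G (k + 1)) Y (x, 0)) :
    Sec (qG G k) (fun x => (Y (x, 0)).1) x := by
  filter_upwards [(tendsto_slice x).eventually hY, Metric.isOpen_ball.mem_nhds hx] with u h1 h2
  exact ⟨slice_smooth h1.1, (h.mem_iff hk (h.zmem' h2)).1 h1.2⟩

theorem Box.lft_sec (h : Box m ε G f) {k : ℕ} (hk : k + 2 ≤ m) {z : M × ℝ} (hz : z ∈ Metric.ball (0 : M × ℝ) ε)
    {X : M → M} (hX : Sec (qG G k) X z.1) : Sec (G (k + 1)) (lft X) z := by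
  filter_upwards [(tendsto_fst' z).eventually hX, h.gou.nhds hz] with u h1 h2
  exact ⟨lft_smooth h1.1, (h.mem_iff hk h2).2 h1.2⟩

theorem Box.q_rank (h : Box m ε G f) {k : ℕ} (hk : k + 2 ≤ m) {x : M} (hx : x ∈ Metric.ball (0 : M) ε) :
    Module.finrank ℝ (qG G k x) = k + 2 := by
  have h1 := h.gou.rank (k + 1) (by omega) _ (h.zmem' hx)
  have h2 : G (k + 1) (x, 0) = (qG G k x).prod ⊤ := by
    ext ⟨v, s⟩
    rw [h.mem_iff hk (h.zmem' hx), Submodule.mem_prod]; simp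
  rw [h2] at h1
  have h3 := (prodEq (qG G k x) (⊤ : Submodule ℝ ℝ)).finrank_eq
  rw [h1, Module.finrank_prod, finrank_top, Module.finrank_self] at h3
  omega

theorem Box.q_sec (h : Box m ε G f) {k : ℕ} (hk : k + 2 ≤ m) {x : M} (hx : x ∈ Metric.ball (0 : M) ε) :
    ∀ v ∈ qG G k x, ∃ X, Sec (qG G k) X x ∧ X x = v := by
  intro v hv
  obtain ⟨X, hX, hXv⟩ := h.gou.sec (k + 1) (by omega) _ (h.zmem' hx) _ (mem_qG.1 hv)
  exact ⟨_, h.res_sec hk hx hX, by simp [hXv]⟩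

theorem Box.lft_frame (h : Box m ε G f) {k : ℕ} (hk : k + 2 ≤ m) {z : M × ℝ} (hz : z ∈ Metric.ball (0 : M × ℝ) ε)
    {e : Fin (k + 2) → M → M} {θ : Fin (k + 2) → M → (M →L[ℝ] ℝ)}
    (hfr : ∀ᶠ x in 𝓝 z.1, FrAt (qG G k) e θ x) :
    ∃ θ', ∀ᶠ u in 𝓝 z, FrAt (G (k + 1)) (fun o : Option (Fin (k + 2)) =>
      o.elim dy (fun i => lft (e i))) θ' u := by
  obtain ⟨θ', hθ'⟩ := exists_frame (G (k + 1)) (fun o : Option (Fin (k + 2)) =>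
      o.elim dy (fun i => lft (e i))) z
    (by
      filter_upwards [h.gou.nhds hz] with x hx
      rw [h.gou.rank (k + 1) (by omega) x hx, Fintype.card_option, Fintype.card_fin])
    (by
      rintro (_ | i)
      · exact h.dy_sec (by omega) hz
      · exact h.lft_sec hk hz (FrAt.sec hfr i))
    (by
      rw [Fintype.linearIndependent_iff]
      intro g hg
      rw [Fintype.sum_option] at hg
      have hli := hfr.self_of_nhds.2.2.2.2
      rw [Fintype.linearIndependent_iff] at hli
      have h1 : ∑ i, g (some i) • e i z.1 = 0 := by
        have := congrArg Prod.fst hg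
        simpa [dy, lft, Prod.fst_sum] using this
      have h2 : g none = 0 := by
        have := congrArg Prod.snd hg
        simpa [dy, lft, Prod.snd_sum] using this
      rintro (_ | i)
      · exact h2
      · exact hli _ h1 i)
  exact ⟨θ', hθ'.mono fun x hx => hx.1⟩

theorem Box.quot (h : Box m ε G f) (hM : Module.finrank ℝ M = m) :
    Gou m (Metric.ball (0 : M) ε) (qG G) (fun x => (f (x, 0)).1) where
  opn := Metric.isOpen_ball
  fr := hM
  smf := fun x hx => slice_smooth (h.gou.smf _ (h.zmem' hx))
  rank := fun k hk x hx => h.q_rank hk hx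
  sec := fun k hk x hx => h.q_sec hk hx
  mono := fun k hk x hx v hv => h.gou.mono (k + 1) (by omega) _ (h.zmem' hx) hv
  brk := by
    intro k hk x hx X Y hX hY
    have h1 := h.gou.brk (k + 1) (by omega) _ (h.zmem' hx) _ _
      (h.lft_sec (by omega) (h.zmem' hx) hX) (h.lft_sec (by omega) (h.zmem' hx) hY)
    rwa [lft_bracket hX.self_of_nhds.1 hY.self_of_nhds.1] at h1
  ninv := by
    intro k hk x hx
    by_contra! hcon
    obtain ⟨e, θ, he, hfr⟩ := exists_frame_fin (qG G k) x (k + 2)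
      (Filter.Eventually.mono (Metric.isOpen_ball.mem_nhds hx) fun x hx => h.q_rank (by omega) hx)
      (h.q_sec (by omega) hx)
    have hz := h.zmem' hx
    obtain ⟨θ', hθ'⟩ := h.lft_frame (k := k) (by omega) hz (hfr.mono fun _ h => h.1)
    obtain ⟨X, Y, hX, hY, hXY⟩ := h.gou.ninv (k + 1) (by omega) _ hz
    refine hXY (bracket_mem_of_frame₂ hθ' _ le_rfl ?_ hX hY)
    have hs : ∀ i, ContDiffAt ℝ ∞ (e i) x := fun i => (he i).self_of_nhds.1
    rintro (_ | i) (_ | j)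
    · simp [VectorField.lieBracket]
    · simp only [Option.elim]
      rw [dy_lft_bracket (hs j)]; exact Submodule.zero_mem _
    · apply bracket_mem_swap
      simp only [Option.elim]
      rw [dy_lft_bracket (hs i)]; exact Submodule.zero_mem _
    · simp only [Option.elim]
      rw [lft_bracket (hs i) (hs j), h.mem_iff (by omega) hz]
      exact hcon _ _ (he i) (he j)
  drift := by
    intro k hk1 hk x hx X hX hXc
    have hz := h.zmem' hx
    obtain ⟨e, θ, he, hfr⟩ := exists_frame_fin (qG G k) x (k + 2)
      (Filter.Eventually.mono (Metric.isOpen_ball.mem_nhds hx) fun x hx => h.q_rank (by omega) hx)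
      (h.q_sec (by omega) hx)
    obtain ⟨θ', hθ'⟩ := h.lft_frame (k := k) (by omega) hz (hfr.mono fun _ h => h.1)
    have hd := h.gou.drift (k + 1) (by omega) (by omega) _ hz (lft X)
      (h.lft_sec (by omega) hz hX) (by
        apply chr_of_frame hθ'
        have ht := tendsto_fst' (x, (0 : ℝ))
        filter_upwards [h.gou.nhds hz, ht.eventually hXc, ht.eventually hX,
          ht.eventually (eventually_all.2 fun i => (he i).nhds)] with u hu h1 h2 h3
        rintro (_ | i)
        · apply bracket_mem_swap
          simp only [Option.elim]
          rw [dy_lft_bracket h2.1]; exact Submodule.zero_mem _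
        · simp only [Option.elim]
          rw [lft_bracket h2.1 (h3 i).self_of_nhds.1]
          exact (h.mem_iff (by omega) hu).2 (h1 _ (h3 i)))
    have h5 := (h.mem_iff (k := k) (v := (VectorField.lieBracket ℝ f (lft X) (x, 0)).1)
      (s := (VectorField.lieBracket ℝ f (lft X) (x, 0)).2) (by omega) hz).1 hd
    convert h5 using 1
    simp only [VectorField.lieBracket]
    rw [lft_fderiv hX.self_of_nhds.1, (hasFDerivAt_slice (h.gou.smf _ hz)).fderiv]
    simp [lft]

theorem Box.fdiff (h : Box m ε G f) (hm : 2 ≤ m) (hM : Module.finrank ℝ M = m) {x : M} {y : ℝ}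
    (hz : (x, y) ∈ Metric.ball (0 : M × ℝ) ε) : (f (x, y)).1 - (f (x, 0)).1 ∈ qG G 0 x := by
  have hz' := mem_ball_prod.1 hz
  rcases Nat.lt_or_ge 2 m with h3 | h2
  · refine seg_mem (qG G 0 x) (fun y => (f (x, y)).1) ε (fun s hs => ?_) y hz'.2
    have hs' : (x, s) ∈ Metric.ball (0 : M × ℝ) ε := mem_ball_prod.2 ⟨hz'.1, hs⟩
    refine ⟨(fderiv ℝ f (x, s) (0, 1)).1, ?_, ?_⟩
    · exact (ContinuousLinearMap.fst ℝ M ℝ).hasFDerivAt.comp_hasDerivAt s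
        (hasDerivAt_line (h.gou.smf _ hs'))
    · have := h.gou.drift 1 le_rfl (by omega) _ hs' dy (h.dy_sec (by omega) hs')
        (h.chr 1 le_rfl (by omega) _ hs')
      have := bracket_mem_swap this
      rw [lieBracket_dy] at this
      exact (h.mem_iff (k := 0) (s := (fderiv ℝ f (x, s) (0, 1)).2) (by omega) hs').1 this
  · have : qG G 0 x = ⊤ := by
      apply Submodule.eq_top_of_finrank_eq
      rw [h.q_rank (by omega) hz'.1, hM]; omega
    rw [this]; trivial

end Quot

end

noncomputable section
open Set Filter Topology
open scoped ContDiff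
set_option linter.unusedSectionVars false
set_option linter.deprecated false

section Step
variable {M : Type} [NormedAddCommGroup M] [NormedSpace ℝ M] [FiniteDimensional ℝ M]

theorem fst_smooth {T : M → ℝ} {X : M × ℝ → M × ℝ} {u : M × ℝ} (hT : ContDiffAt ℝ ∞ T u.1)
    (hX : ContDiffAt ℝ ∞ X u) : ContDiffAt ℝ ∞ (fun u => fderiv ℝ T u.1 (X u).1) u := by
  have h1 : ContDiffAt ℝ ∞ (fun u : M × ℝ => fderiv ℝ T u.1) u :=
    ContDiffAt.comp u (hT.fderiv_right (m := ∞) (by simp)) contDiffAt_fst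
  exact h1.clm_apply hX.fst

theorem fst_dy {T : M → ℝ} {X : M × ℝ → M × ℝ} {u : M × ℝ} (hT : ContDiffAt ℝ ∞ T u.1)
    (hX : ContDiffAt ℝ ∞ X u) : fderiv ℝ (fun u => fderiv ℝ T u.1 (X u).1) u (0, 1) =
      fderiv ℝ T u.1 (fderiv ℝ X u (0, 1)).1 := by
  obtain ⟨x, y⟩ := u
  have h1 := hasDerivAt_line (fst_smooth hT hX)
  have h2 := hasDerivAt_line hX
  have h3 : HasDerivAt (fun s => fderiv ℝ T x (X (x, s)).1)
      (fderiv ℝ T x (fderiv ℝ X (x, y) (0, 1)).1) y :=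
    ((fderiv ℝ T x).comp (ContinuousLinearMap.fst ℝ M ℝ)).hasFDerivAt.comp_hasDerivAt y h2
  exact h1.unique h3

theorem fderiv_fst_comp {T : M → ℝ} {u : M × ℝ} (hT : ContDiffAt ℝ ∞ T u.1) (w : M × ℝ) :
    fderiv ℝ (fun u : M × ℝ => T u.1) u w = fderiv ℝ T u.1 w.1 := by
  have h1 : HasFDerivAt (fun z : M × ℝ => T z.1) ((fderiv ℝ T u.1).comp (ContinuousLinearMap.fst ℝ M ℝ)) u :=
    (hT.differentiableAt (by simp)).hasFDerivAt.comp u hasFDerivAt_fst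
  rw [h1.fderiv]; rfl

/-- Wronskian argument. -/
theorem wronskian_ne {V : Type} [AddCommGroup V] [Module ℝ V] (S : Submodule ℝ V) (L T : V →ₗ[ℝ] ℝ)
    (hinj : ∀ w ∈ S, L w = 0 → T w = 0 → w = 0) {Y Y1 : V} (hY : Y ∈ S) (hY1 : Y1 ∈ S) (hY0 : Y ≠ 0)
    (hn : ∀ r : ℝ, Y1 ≠ r • Y) : T Y * L Y1 - L Y * T Y1 ≠ 0 := by
  intro hW
  have h1 : T Y • Y1 - T Y1 • Y = 0 := by
    apply hinj _ (S.sub_mem (S.smul_mem _ hY1) (S.smul_mem _ hY))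
    · simp only [map_sub, map_smul, smul_eq_mul]; linarith
    · simp only [map_sub, map_smul, smul_eq_mul]; ring
  have h2 : L Y • Y1 - L Y1 • Y = 0 := by
    apply hinj _ (S.sub_mem (S.smul_mem _ hY1) (S.smul_mem _ hY))
    · simp only [map_sub, map_smul, smul_eq_mul]; ring
    · simp only [map_sub, map_smul, smul_eq_mul]; linarith
  by_cases hb : T Y = 0
  · by_cases ha : L Y = 0
    · exact hY0 (hinj Y hY ha hb)
    · apply hn (L Y1 / L Y)
      rw [div_eq_inv_mul, mul_smul, eq_inv_smul_iff₀ ha]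
      exact sub_eq_zero.1 h2
  · apply hn (T Y1 / T Y)
    rw [div_eq_inv_mul, mul_smul, eq_inv_smul_iff₀ hb]
    exact sub_eq_zero.1 h1

theorem Box.step {p : ℕ} {ε : ℝ} {G : ℕ → M × ℝ → Submodule ℝ (M × ℝ)} {f : M × ℝ → M × ℝ}
    (h : Box (p + 2) ε G f) (hM : Module.finrank ℝ M = p + 2)
    (hT : Tri (p + 2) (Metric.ball (0 : M) ε) (qG G 0) (fun x => (f (x, 0)).1)) :
    Tri (p + 3) (Metric.ball (0 : M × ℝ) ε) (G 0) f := by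
  obtain ⟨q, hq, z, t, Φ, hev⟩ := hT
  have hq0 := h.zmem' hq
  -- a frame `dy, X` of `G 0`
  have hXex : ∃ X, Sec (G 0) X (q, 0) ∧ (X (q, 0)).1 ≠ 0 := by
    by_contra! hcon
    have hr := h.gou.rank 0 (by omega) _ hq0
    have hle : G 0 (q, 0) ≤ Submodule.span ℝ {((0 : M), (1 : ℝ))} := by
      intro v hv
      obtain ⟨X, hX, hXv⟩ := h.gou.sec 0 (by omega) _ hq0 v hv
      have h1 := hcon X hX
      rw [hXv] at h1
      rw [Submodule.mem_span_singleton]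
      exact ⟨v.2, Prod.ext (by simp [h1]) (by simp)⟩
    have h2 := Submodule.finrank_mono hle
    have h3 := finrank_span_le_card (R := ℝ) ({((0 : M), (1 : ℝ))} : Set (M × ℝ))
    simp at h3
    omega
  obtain ⟨X, hX, hX0⟩ := hXex
  obtain ⟨θ, hθ⟩ := exists_frame (G 0) (![dy, X] : Fin 2 → M × ℝ → M × ℝ) (q, 0)
    (by filter_upwards [h.gou.nhds hq0] with u hu; rw [h.gou.rank 0 (by omega) u hu]; simp)
    (by
      intro i
      fin_cases i
      · exact h.dy_sec (by omega) hq0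
      · exact hX)
    (by
      rw [Fintype.linearIndependent_iff]
      intro g hg
      simp only [Fin.sum_univ_two, Matrix.cons_val_zero, Matrix.cons_val_one] at hg
      have h1 : g 1 = 0 := by
        have := congrArg Prod.fst hg
        simpa [dy, hX0] using this
      have h2 : g 0 = 0 := by
        have := congrArg Prod.snd hg
        simpa [dy, h1] using this
      intro i
      fin_cases i
      · exact h2
      · exact h1)
  obtain ⟨Good, hGood⟩ : ∃ Good : M × ℝ → Prop, Good = fun u => 
    ((∀ j, j + 2 ≤ p + 2 → ContDiffAt ℝ ∞ (z j) u.1) ∧ ContDiffAt ℝ ∞ t u.1 ∧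
      (∀ w, (∀ j, j + 2 ≤ p + 2 → fderiv ℝ (z j) u.1 w = 0) → fderiv ℝ t u.1 w = 0 → w = 0) ∧
      (∀ j, j + 3 ≤ p + 2 → ContDiffAt ℝ ∞ (Φ j) (fun i => z i u.1, t u.1) ∧
        ∀ w ∈ qG G 0 u.1, fderiv ℝ (z j) u.1 ((f (u.1, 0)).1 + w) =
          Φ j (fun i => z i u.1, t u.1) + z (j + 1) u.1 * fderiv ℝ t u.1 ((f (u.1, 0)).1 + w)))
      ∧ u ∈ Metric.ball (0 : M × ℝ) ε ∧ FrAt (G 0) (![dy, X] : Fin 2 → M × ℝ → M × ℝ) θ u := ⟨_, rfl⟩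
  have hgd : ∀ᶠ u in 𝓝 (q, (0 : ℝ)), Good u := by
    rw [hGood]
    exact ((tendsto_fst' (q, (0 : ℝ))).eventually hev).and
      ((h.gou.nhds hq0).and (hθ.mono fun _ h => h.1))
  subst hGood
  set a : M × ℝ → ℝ := fun u => fderiv ℝ (z p) u.1 (X u).1 with ha
  set b : M × ℝ → ℝ := fun u => fderiv ℝ t u.1 (X u).1 with hb
  -- values of sections of `G 0`
  have hval : ∀ u, FrAt (G 0) (![dy, X] : Fin 2 → M × ℝ → M × ℝ) θ u → ∀ w ∈ G 0 u,
      w.1 = θ 1 u w • (X u).1 := by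
    intro u hu w hw
    have h1 := hu.2.2.2.1 w hw
    simp only [Fin.sum_univ_two, Matrix.cons_val_zero, Matrix.cons_val_one] at h1
    have := congrArg Prod.fst h1
    simpa [dy] using this.symm
  have hfst : ∀ u ∈ Metric.ball (0 : M × ℝ) ε, ∀ w ∈ G 1 u, w.1 ∈ qG G 0 u.1 := by
    intro u hu w hw
    exact (h.mem_iff (k := 0) (y := u.2) (s := w.2) (by omega) hu).1 hw
  have hfst0 : ∀ u ∈ Metric.ball (0 : M × ℝ) ε, ∀ w ∈ G 0 u, w.1 ∈ qG G 0 u.1 :=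
    fun u hu w hw => hfst u hu w (h.gou.mono 0 (by omega) u hu hw)
  -- the Wronskian
  have hW : ∀ᶠ u in 𝓝 (q, (0 : ℝ)),
      b u * fderiv ℝ a u (0, 1) - a u * fderiv ℝ b u (0, 1) ≠ 0 := by
    filter_upwards [eventually_eventually_nhds.2 hgd] with u hu'
    have hu := hu'.self_of_nhds
    obtain ⟨⟨hz, ht, hker, heq⟩, hbu, hfu⟩ := hu
    have hXs : ContDiffAt ℝ ∞ X u := hfu.1 1
    have hXS : Sec (G 0) X u := FrAt.sec (hu'.mono fun _ h => h.2.2) 1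
    rw [ha, hb, fst_dy (hz p le_rfl) hXs, fst_dy ht hXs]
    have hbr := h.gou.brk 0 (by omega) u hbu dy X (h.dy_sec (by omega) hbu) hXS
    rw [lieBracket_dy] at hbr
    refine wronskian_ne (qG G 0 u.1) (fderiv ℝ (z p) u.1 : M →ₗ[ℝ] ℝ) (fderiv ℝ t u.1 : M →ₗ[ℝ] ℝ)
      ?_ (hfst0 u hbu _ (hfu.2.2.1 1)) (hfst u hbu _ hbr) ?_ ?_
    · intro w hw h1 h2
      apply hker w _ h2
      intro j hj
      rcases Nat.lt_or_ge j p with hjp | hjp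
      · have e1 := (heq j (by omega)).2 w hw
        have e2 := (heq j (by omega)).2 0 (Submodule.zero_mem _)
        have h2' : fderiv ℝ t u.1 w = 0 := h2
        simp only [map_add, map_zero, h2'] at e1 e2
        linarith
      · have : j = p := by omega
        rw [this]; exact h1
    · intro h0
      have hli := hfu.2.2.2.2
      rw [Fintype.linearIndependent_iff] at hli
      have h0' : (X u).1 = 0 := h0
      have := hli ![-(X u).2, 1] (by
        simp only [Fin.sum_univ_two, Matrix.cons_val_zero, Matrix.cons_val_one]
        exact Prod.ext (by simp [dy, h0']) (by simp [dy])) 1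
      simp at this
    · intro r hr
      have hmem : VectorField.lieBracket ℝ dy X u ∈ G 0 u := by
        rw [lieBracket_dy]
        have h3 : fderiv ℝ X u (0, 1) = r • X u + ((fderiv ℝ X u (0, 1)).2 - r * (X u).2) • (0, 1) := by
          refine Prod.ext ?_ ?_
          · simp [hr]
          · simp
        rw [h3]
        exact Submodule.add_mem _ (Submodule.smul_mem _ _ hXS.self_of_nhds.2)
          (Submodule.smul_mem _ _ (h.dy0 u hbu))
      obtain ⟨X1, Y1, hX1, hY1, hXY⟩ := h.gou.ninv 0 (by omega) u hbu
      refine hXY (bracket_mem_of_frame₂ (hu'.mono fun _ h => h.2.2) _ le_rfl ?_ hX1 hY1)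
      intro i j
      fin_cases i <;> fin_cases j
      · simp [VectorField.lieBracket]
      · exact hmem
      · exact bracket_mem_swap hmem
      · simp [VectorField.lieBracket]
  -- a good point
  have hpt : ∃ z1, (∀ᶠ u in 𝓝 z1, b u * fderiv ℝ a u (0, 1) - a u * fderiv ℝ b u (0, 1) ≠ 0) ∧
      (∀ᶠ u in 𝓝 z1, ((∀ j, j + 2 ≤ p + 2 → ContDiffAt ℝ ∞ (z j) u.1) ∧ ContDiffAt ℝ ∞ t u.1 ∧
      (∀ w, (∀ j, j + 2 ≤ p + 2 → fderiv ℝ (z j) u.1 w = 0) → fderiv ℝ t u.1 w = 0 → w = 0) ∧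
      (∀ j, j + 3 ≤ p + 2 → ContDiffAt ℝ ∞ (Φ j) (fun i => z i u.1, t u.1) ∧
        ∀ w ∈ qG G 0 u.1, fderiv ℝ (z j) u.1 ((f (u.1, 0)).1 + w) =
          Φ j (fun i => z i u.1, t u.1) + z (j + 1) u.1 * fderiv ℝ t u.1 ((f (u.1, 0)).1 + w)))
      ∧ u ∈ Metric.ball (0 : M × ℝ) ε ∧ FrAt (G 0) (![dy, X] : Fin 2 → M × ℝ → M × ℝ) θ u) ∧
      b z1 ≠ 0 := by
    by_contra! hcon
    have hb0 : b =ᶠ[𝓝 (q, (0 : ℝ))] fun _ => 0 := by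
      filter_upwards [eventually_eventually_nhds.2 hW, eventually_eventually_nhds.2 hgd] with u h1 h2
      exact hcon u h1 h2
    apply hW.self_of_nhds
    rw [hb0.fderiv_eq, hb0.self_of_nhds]
    simp
  obtain ⟨z1, hW1, hg1, hb1⟩ := hpt
  have hsab : ∀ᶠ u in 𝓝 z1, ContDiffAt ℝ ∞ a u ∧ ContDiffAt ℝ ∞ b u := by
    filter_upwards [hg1] with u hu
    exact ⟨fst_smooth (hu.1.1 p le_rfl) (hu.2.2.1 1), fst_smooth hu.1.2.1 (hu.2.2.1 1)⟩
  have hbne : ∀ᶠ u in 𝓝 z1, b u ≠ 0 :=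
    hsab.self_of_nhds.2.continuousAt.eventually_ne hb1
  set c : M × ℝ → ℝ := fun u => a u / b u with hc
  have hcs : ∀ᶠ u in 𝓝 z1, ContDiffAt ℝ ∞ c u ∧ fderiv ℝ c u (0, 1) ≠ 0 := by
    filter_upwards [hsab, hbne, hW1] with u h1 h2 h3
    refine ⟨h1.1.div h1.2 h2, ?_⟩
    have e1 := hasDerivAt_line (x := u.1) (y := u.2) h1.1
    have e2 := hasDerivAt_line (x := u.1) (y := u.2) h1.2
    have e3 := hasDerivAt_line (x := u.1) (y := u.2) (h1.1.div h1.2 h2)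
    have e4 := (e1.div e2 h2).unique e3
    change _ = fderiv ℝ c u (0, 1) at e4
    rw [← e4]
    apply div_ne_zero _ (pow_ne_zero 2 h2)
    intro h0
    apply h3
    change fderiv ℝ a u (0, 1) * b u - a u * fderiv ℝ b u (0, 1) = 0 at h0
    linarith
  set zn : ℕ → M × ℝ → ℝ := fun j => if j = p + 1 then c else fun u => z j u.1 with hzn
  have hznp : zn (p + 1) = c := by simp [hzn]
  have hznj : ∀ j, j ≤ p → zn j = fun u => z j u.1 := by
    intro j hj
    simp only [hzn]; rw [if_neg (by omega)]
  have hzns : ∀ᶠ u in 𝓝 z1, ∀ j, j + 2 ≤ p + 3 → ContDiffAt ℝ ∞ (zn j) u := by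
    filter_upwards [hg1, hcs] with u h1 h2 j hj
    rcases Nat.lt_or_ge j (p + 1) with h3 | h3
    · rw [hznj j (by omega)]
      exact ContDiffAt.comp u (h1.1.1 j (by omega)) contDiffAt_fst
    · rw [show j = p + 1 by omega, hznp]; exact h2.1
  have hts : ∀ᶠ u in 𝓝 z1, ContDiffAt ℝ ∞ (fun u : M × ℝ => t u.1) u := by
    filter_upwards [hg1] with u h1
    exact ContDiffAt.comp u h1.1.2.1 contDiffAt_fst
  have hker : ∀ᶠ u in 𝓝 z1, ∀ w, (∀ j, j + 2 ≤ p + 3 → fderiv ℝ (zn j) u w = 0) →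
      fderiv ℝ (fun u : M × ℝ => t u.1) u w = 0 → w = 0 := by
    filter_upwards [hg1, hcs] with u h1 h2 w hw1 hw2
    have h3 : w.1 = 0 := by
      apply h1.1.2.2.1
      · intro j hj
        have := hw1 j (by omega)
        rwa [hznj j (by omega), fderiv_fst_comp (h1.1.1 j hj)] at this
      · rwa [fderiv_fst_comp h1.1.2.1] at hw2
    have h4 := hw1 (p + 1) (by omega)
    rw [hznp] at h4
    have h5 : w = w.2 • ((0 : M), (1 : ℝ)) := Prod.ext (by simp [h3]) (by simp)
    rw [h5, map_smul, smul_eq_mul] at h4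
    have h6 : w.2 = 0 := (mul_eq_zero.1 h4).resolve_right h2.2
    exact Prod.ext h3 h6
  -- the chart
  set Θ : M × ℝ → (Fin (p + 2) → ℝ) × ℝ := fun u => (fun i => zn i u, t u.1) with hΘ
  have hΘs : ∀ᶠ u in 𝓝 z1, ContDiffAt ℝ ∞ Θ u := by
    filter_upwards [hzns, hts] with u h1 h2
    refine ContDiffAt.prodMk ?_ h2
    rw [contDiffAt_pi]
    exact fun i => h1 i (by omega)
  have hinj : Function.Injective (fderiv ℝ Θ z1) := by
    rw [injective_iff_map_eq_zero]
    intro w hw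
    have h1 := (hΘs.self_of_nhds.differentiableAt (by simp)).hasFDerivAt
    apply hker.self_of_nhds w
    · intro j hj
      have h2 : HasFDerivAt (fun u => (Θ u).1 ⟨j, by omega⟩) _ z1 :=
        ((ContinuousLinearMap.proj (R := ℝ) (φ := fun _ : Fin (p + 2) => ℝ) ⟨j, by omega⟩).comp
          (ContinuousLinearMap.fst ℝ _ ℝ)).hasFDerivAt.comp z1 h1
      have h3 : fderiv ℝ (zn j) z1 = _ := h2.fderiv
      rw [h3]
      simp [hw]
    · have h2 : HasFDerivAt (fun u => (Θ u).2) _ z1 :=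
        (ContinuousLinearMap.snd ℝ (Fin (p + 2) → ℝ) ℝ).hasFDerivAt.comp z1 h1
      have h3 : fderiv ℝ (fun u : M × ℝ => t u.1) z1 = _ := h2.fderiv
      rw [h3]
      simp [hw]
  let eΘ : (M × ℝ) ≃L[ℝ] (Fin (p + 2) → ℝ) × ℝ :=
    (LinearEquiv.ofInjectiveOfFinrankEq (fderiv ℝ Θ z1 : M × ℝ →ₗ[ℝ] _) hinj
      (by simp [Module.finrank_prod, hM])).toContinuousLinearEquiv
  have heΘ : (eΘ : M × ℝ →L[ℝ] (Fin (p + 2) → ℝ) × ℝ) = fderiv ℝ Θ z1 := by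
    ext w <;> rfl
  obtain ⟨κ, hk1, -, hk2, -, -, hk3⟩ := exists_smooth_inverse Θ z1 univ univ_mem hΘs eΘ
    (by rw [heΘ]; exact (hΘs.self_of_nhds.differentiableAt (by simp)).hasFDerivAt)
  set H : M × ℝ → ℝ := fun u => fderiv ℝ (z p) u.1 (f u).1 - c u * fderiv ℝ t u.1 (f u).1 with hH
  have hHs : ∀ᶠ u in 𝓝 z1, ContDiffAt ℝ ∞ H u := by
    filter_upwards [hg1, hcs] with u h1 h2
    have hf := h.gou.smf u h1.2.1
    exact (fst_smooth (h1.1.1 p le_rfl) hf).sub (h2.1.mul (fst_smooth h1.1.2.1 hf))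
  refine ⟨z1, hg1.self_of_nhds.2.1, zn, fun u => t u.1,
    Function.update Φ p (fun v => H (κ.symm v)), ?_⟩
  filter_upwards [hzns, hts, hker, hg1, hHs, κ.open_source.mem_nhds hk1, hbne]
    with u e1 e2 e3 e4 e5 e6 e7
  refine ⟨e1, e2, e3, fun j hj => ?_⟩
  obtain ⟨⟨g1, g2, g3, g4⟩, hbu, hfu⟩ := e4
  rcases Nat.lt_or_ge j p with hjp | hjp
  · rw [Function.update_of_ne (by omega)]
    have e8 : (fun i : Fin (j + 2) => zn i u) = fun i : Fin (j + 2) => z i u.1 := by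
      funext i
      rw [hznj i (by omega)]
    rw [e8]
    refine ⟨(g4 j (by omega)).1, fun w hw => ?_⟩
    rw [hznj j (by omega), hznj (j + 1) (by omega), fderiv_fst_comp (g1 j (by omega)),
      fderiv_fst_comp g2]
    have h1 := h.fdiff (by omega) hM (x := u.1) (y := u.2) hbu
    have h2 := (g4 j (by omega)).2 _ (Submodule.add_mem _ h1 (hfst0 u hbu w hw))
    have h3 : (f (u.1, 0)).1 + ((f (u.1, u.2)).1 - (f (u.1, 0)).1 + w.1) = (f u + w).1 := by
      simp only [Prod.fst_add]; abel
    rw [h3] at h2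
    exact h2
  · obtain rfl : j = p := by omega
    rw [Function.update_self]
    have e8 : ((fun i : Fin (j + 2) => zn i u), t u.1) = κ u := by rw [hk2]
    rw [e8]
    have e9 : κ.symm (κ u) = u := κ.left_inv e6
    refine ⟨?_, fun w hw => ?_⟩
    · refine ContDiffAt.comp (κ u) (f := κ.symm) (g := H) ?_ (hk3 _ (κ.map_source e6))
      rw [e9]; exact e5
    · rw [e9, hznj j le_rfl, hznp, fderiv_fst_comp (g1 j le_rfl), fderiv_fst_comp g2]
      simp only [Prod.fst_add, map_add, hval u hfu w hw, map_smul, smul_eq_mul, hH, hc, ha, hb]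
      have e7' : fderiv ℝ t u.1 (X u).1 ≠ 0 := e7
      field_simp
      ring

end Step

/-- Goursat flags with compatible drift have a triangular form near some point. -/
theorem Gou.tri (p : ℕ) : ∀ {E : Type} [NormedAddCommGroup E] [NormedSpace ℝ E]
    [FiniteDimensional ℝ E] {O : Set E} {G : ℕ → E → Submodule ℝ E} {f : E → E},
    Gou (p + 2) O G f → O.Nonempty → Tri (p + 2) O (G 0) f := by
  induction p with
  | zero =>
    intro E _ _ _ O G f h hO
    obtain ⟨q, hq⟩ := hO
    have hE : Module.finrank ℝ E = Module.finrank ℝ (Fin 2 → ℝ) := by rw [h.fr]; simp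
    let e : E ≃L[ℝ] (Fin 2 → ℝ) := (LinearEquiv.ofFinrankEq _ _ hE).toContinuousLinearEquiv
    let l : Fin 2 → (E →L[ℝ] ℝ) := fun i => (ContinuousLinearMap.proj i).comp (e : E →L[ℝ] (Fin 2 → ℝ))
    refine ⟨q, hq, fun _ => l 0, l 1, fun _ _ => 0, ?_⟩
    filter_upwards with x
    refine ⟨fun _ _ => (l 0).contDiff.contDiffAt, (l 1).contDiff.contDiffAt, ?_, ?_⟩
    · intro w hw1 hw2
      have h1 := hw1 0 (by omega)
      rw [ContinuousLinearMap.fderiv] at h1 hw2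
      apply e.injective
      rw [map_zero]
      funext i
      fin_cases i
      · exact h1
      · exact hw2
    · intro j hj; omega
  | succ p ih =>
    intro E _ _ _ O G f h hO
    obtain ⟨q, hq⟩ := hO
    obtain ⟨M, hM, κ, hκ, hκO, ε, hsub, hbox⟩ := h.exists_box (m := p + 2) (by omega) hq
    have h1 := ih (hbox.quot hM) ⟨0, Metric.mem_ball_self hbox.pos⟩
    exact hκ.tri hκO ((hbox.step hM h1).mono hsub)

end

noncomputable section
open Set Filter Topology
open scoped ContDiff
set_option linter.unusedSectionVars false
set_option linter.deprecated false

section Init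
variable {n : ℕ} {U : Set (Fin n → ℝ)}

/-- Values of a module of vector fields. -/
def vals (A : Set (VF n)) (q : Fin n → ℝ) : Submodule ℝ (Fin n → ℝ) :=
  Submodule.span ℝ { w : Fin n → ℝ | ∃ X ∈ A, w = X q }

theorem vals_mem {A : Set (VF n)} {X : VF n} (hX : X ∈ A) (q : Fin n → ℝ) : X q ∈ vals A q :=
  Submodule.subset_span ⟨X, hX, rfl⟩

/-- All members smooth on `U`. -/
def SmOn (U : Set (Fin n → ℝ)) (A : Set (VF n)) : Prop :=
  ∀ X ∈ A, ∀ x ∈ U, ContDiffAt ℝ ∞ X x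

theorem SmOn.span (hU : IsOpen U) {A : Set (VF n)} (h : SmOn U A) : SmOn U (spanOn U A) := by
  rintro X ⟨m, c, Y, hc, hY, hX⟩ x hx
  have h1 : X =ᶠ[𝓝 x] fun x => ∑ i, c i x • Y i x := by
    filter_upwards [hU.mem_nhds hx] with u hu using hX u hu
  refine ContDiffAt.congr_of_eventuallyEq ?_ h1
  refine ContDiffAt.sum fun i _ => ?_
  exact ((hc i).contDiffAt (hU.mem_nhds hx)).smul (h _ (hY i) x hx)

theorem SmOn.add (hU : IsOpen U) {A B : Set (VF n)} (hA : SmOn U A) (hB : SmOn U B) : SmOn U (addOn U A B) := by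
  rintro X ⟨Y, hY, Z, hZ, hX⟩ x hx
  have h1 : X =ᶠ[𝓝 x] fun x => Y x + Z x := by
    filter_upwards [hU.mem_nhds hx] with u hu using hX u hu
  exact ((hA Y hY x hx).add (hB Z hZ x hx)).congr_of_eventuallyEq h1

theorem SmOn.brk (hU : IsOpen U) {A B : Set (VF n)} (hA : SmOn U A) (hB : SmOn U B) : SmOn U (bracketSet A B) := by
  rintro _ ⟨X, hX, Y, hY, rfl⟩ x hx
  exact (Sec.bracket_smooth (X := X) (Y := Y) (q := x)
    (by filter_upwards [hU.mem_nhds hx] with u hu using hA X hX u hu)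
    (by filter_upwards [hU.mem_nhds hx] with u hu using hB Y hY u hu)).self_of_nhds

theorem SmOn.flag (hU : IsOpen U) {A : Set (VF n)} (h : SmOn U A) (k : ℕ) : SmOn U (derivedFlag U A k) := by
  induction k with
  | zero => exact h
  | succ k ih => exact ih.add hU ((ih.brk hU ih).span hU)

theorem zero_mem_spanOn (S : Set (VF n)) : (0 : VF n) ∈ spanOn U S :=
  ⟨0, fun _ _ => 0, fun i => i.elim0, fun i => i.elim0, fun i => i.elim0, fun x _ => by simp⟩

theorem zero_mem_flag (S : Set (VF n)) (k : ℕ) :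
    (0 : VF n) ∈ derivedFlag U (spanOn U S) k := by
  induction k with
  | zero => exact zero_mem_spanOn S
  | succ k ih => exact ⟨0, ih, 0, zero_mem_spanOn _, fun x _ => by simp⟩

theorem flag_mono (A : Set (VF n)) (k : ℕ) : derivedFlag U A k ⊆ derivedFlag U A (k + 1) :=
  fun X hX => ⟨X, hX, 0, zero_mem_spanOn _, fun x _ => by simp⟩

theorem flag_brk (S : Set (VF n)) (k : ℕ) {X Y : VF n} (hX : X ∈ derivedFlag U (spanOn U S) k)
    (hY : Y ∈ derivedFlag U (spanOn U S) k) :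
    VectorField.lieBracket ℝ X Y ∈ derivedFlag U (spanOn U S) (k + 1) := by
  refine ⟨0, zero_mem_flag S k, lieBracket X Y, ?_, fun x _ => ?_⟩
  · exact ⟨1, fun _ _ => 1, fun _ => lieBracket X Y, fun _ => contDiffOn_const,
      fun _ => ⟨X, hX, Y, hY, rfl⟩, fun x _ => by simp⟩
  · simp [lieBracket, VectorField.lieBracket]

theorem vals_sec' (hU : IsOpen U) {A : Set (VF n)} (h : SmOn U A) {X : VF n} (hX : X ∈ A) {q : Fin n → ℝ}
    (hq : q ∈ U) : Sec (vals A) X q := by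
  filter_upwards [hU.mem_nhds hq] with u hu
  exact ⟨h X hX u hu, vals_mem hX u⟩

theorem vals_sec (hU : IsOpen U) {A : Set (VF n)} (h : SmOn U A) {q : Fin n → ℝ} (hq : q ∈ U) :
    ∀ v ∈ vals A q, ∃ X, Sec (vals A) X q ∧ X q = v := by
  intro v hv
  induction hv using Submodule.span_induction with
  | mem v hv =>
    obtain ⟨X, hX, rfl⟩ := hv
    exact ⟨X, vals_sec' hU h hX hq, rfl⟩
  | zero =>
    exact ⟨fun _ => 0, Eventually.of_forall fun x => ⟨contDiffAt_const, Submodule.zero_mem _⟩, rfl⟩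
  | add v w _ _ hv hw =>
    obtain ⟨X, hX, rfl⟩ := hv
    obtain ⟨Y, hY, rfl⟩ := hw
    refine ⟨fun x => X x + Y x, ?_, rfl⟩
    filter_upwards [hX, hY] with x h1 h2
    exact ⟨h1.1.add h2.1, Submodule.add_mem _ h1.2 h2.2⟩
  | smul r v _ hv =>
    obtain ⟨X, hX, rfl⟩ := hv
    refine ⟨fun x => r • X x, ?_, rfl⟩
    filter_upwards [hX] with x h1
    exact ⟨h1.1.const_smul r, Submodule.smul_mem _ _ h1.2⟩

theorem vals_frame (hU : IsOpen U) {A : Set (VF n)} (h : SmOn U A) {q : Fin n → ℝ} (hq : q ∈ U) {r : ℕ}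
    (hr : ∀ᶠ x in 𝓝 q, Module.finrank ℝ (vals A x) = r) :
    ∃ (e : Fin r → VF n) (θ : Fin r → (Fin n → ℝ) → ((Fin n → ℝ) →L[ℝ] ℝ)), (∀ i, e i ∈ A) ∧
      ∀ᶠ x in 𝓝 q, FrAt (vals A) e θ x := by
  have hex : ∃ e : Fin r → VF n, (∀ i, e i ∈ A) ∧ LinearIndependent ℝ (fun i => e i q) := by
    obtain ⟨b, hb, hbs, hli⟩ := exists_linearIndependent ℝ { w : Fin n → ℝ | ∃ X ∈ A, w = X q }
    have hfin : b.Finite := hli.setFinite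
    have : Fintype b := hfin.fintype
    have hcard : Fintype.card b = r := by
      have h1 := finrank_span_eq_card hli
      rw [Subtype.range_coe] at h1
      rw [← h1, hbs]; exact hr.self_of_nhds
    let eq := (Fintype.equivFinOfCardEq hcard).symm
    have hb' : ∀ w : b, ∃ X ∈ A, w.1 = X q := fun w => hb w.2
    choose Y hY hYq using hb'
    refine ⟨fun i => Y (eq i), fun i => hY (eq i), ?_⟩
    have h2 := hli.comp eq eq.injective
    have h3 : (fun i => Y (eq i) q) = (Subtype.val ∘ eq : Fin r → (Fin n → ℝ)) :=
      funext fun i => (hYq (eq i)).symm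
    rw [h3]
    exact h2
  obtain ⟨e, heA, hli⟩ := hex
  obtain ⟨θ, hθ⟩ := exists_frame (vals A) e q (by simpa using hr)
    (fun i => vals_sec' hU h (heA i) hq) hli
  exact ⟨e, θ, heA, hθ.mono fun _ h => h.1⟩

theorem ann_vals {A : Set (VF n)} {η : OneForm n} (hη : η ∈ annihilatorOn U A) {x : Fin n → ℝ}
    (hx : x ∈ U) {v : Fin n → ℝ} (hv : v ∈ vals A x) : η x v = 0 := by
  have : vals A x ≤ LinearMap.ker (η x : (Fin n → ℝ) →ₗ[ℝ] ℝ) := by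
    rw [vals, Submodule.span_le]
    rintro _ ⟨X, hX, rfl⟩
    exact hη.2 X hX x hx
  exact this hv

theorem ann_ext (hU : IsOpen U) {A : Set (VF n)} (h : SmOn U A) {q : Fin n → ℝ} (hq : q ∈ U) {r : ℕ}
    (hr : ∀ᶠ x in 𝓝 q, Module.finrank ℝ (vals A x) = r) (ξ : Covector n)
    (hξ : ∀ v ∈ vals A q, ξ v = 0) : ∃ ρ ∈ annihilatorOn U A, ρ q = ξ := by
  obtain ⟨e, θ, heA, hfr⟩ := vals_frame hU h hq hr
  let Y : OneForm n := fun x => ξ - ∑ i, ξ (e i x) • θ i x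
  have hYs : ∀ x, FrAt (vals A) e θ x → ContDiffAt ℝ ∞ Y x := by
    intro x hx
    refine contDiffAt_const.sub (ContDiffAt.sum fun i _ => ?_)
    exact (ξ.contDiff.contDiffAt.comp x (hx.1 i)).smul (hx.2.1 i)
  have hY0 : ∀ x, FrAt (vals A) e θ x → ∀ v ∈ vals A x, Y x v = 0 := by
    intro x hx v hv
    have h1 := congrArg ξ (hx.2.2.2.1 v hv)
    simp only [map_sum, map_smul, smul_eq_mul] at h1
    simp only [Y, ContinuousLinearMap.sub_apply, ContinuousLinearMap.sum_apply,
      ContinuousLinearMap.smul_apply, smul_eq_mul]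
    rw [← h1, sub_eq_zero]
    exact Finset.sum_congr rfl fun i _ => mul_comm _ _
  obtain ⟨χ, hχ, hχ1, -, hχN, hχY⟩ := exists_cutoff Y q (hfr.mono hYs) {x | FrAt (vals A) e θ x} hfr
  refine ⟨fun x => χ x • Y x, ⟨hχY.contDiffOn, ?_⟩, ?_⟩
  · intro X hX x hx
    by_cases hxN : FrAt (vals A) e θ x
    · simp [hY0 x hxN _ (vals_mem hX x)]
    · have : χ x = 0 := image_eq_zero_of_notMem_tsupport fun hmem => hxN (hχN hmem)
      simp [this]
  · have h1 : χ q = 1 := hχ1.self_of_nhds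
    have h2 : ∀ i, ξ (e i q) = 0 := fun i => hξ _ (vals_mem (heA i) q)
    simp [h1, Y, h2]

theorem pair_deriv {η : OneForm n} {X : VF n} {q : Fin n → ℝ} (hη : ContDiffAt ℝ ∞ η q)
    (hX : ContDiffAt ℝ ∞ X q) (h0 : ∀ᶠ x in 𝓝 q, η x (X x) = 0) (v : Fin n → ℝ) :
    fderiv ℝ η q v (X q) + η q (fderiv ℝ X q v) = 0 := by
  have h1 := (hη.differentiableAt (by simp)).hasFDerivAt.clm_apply
    (hX.differentiableAt (by simp)).hasFDerivAt
  have h2 : HasFDerivAt (fun x => η x (X x)) (0 : (Fin n → ℝ) →L[ℝ] ℝ) q :=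
    (hasFDerivAt_const (0 : ℝ) q).congr_of_eventuallyEq h0
  have h3 := congrArg (fun A => A v) (h1.unique h2)
  simp only [ContinuousLinearMap.add_apply, ContinuousLinearMap.comp_apply,
    ContinuousLinearMap.flip_apply, ContinuousLinearMap.zero_apply] at h3
  rw [add_comm]; exact h3

theorem init_gou (hU : IsOpen U) {f g1 g2 : VF n}
    (hf : ContDiffOn ℝ (⊤ : ℕ∞) f U) (hg1 : ContDiffOn ℝ (⊤ : ℕ∞) g1 U)
    (hg2 : ContDiffOn ℝ (⊤ : ℕ∞) g2 U)
    {D : Set (Fin n → ℝ)} (hDopen : IsOpen D) (hDsub : D ⊆ U)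
    (hdim : ∀ k : ℕ, k + 2 ≤ n → ∀ q ∈ D,
      evalDim (derivedFlag U (spanOn U {g1, g2}) k) q = 2 + k)
    (hlie : ∀ k : ℕ, 1 ≤ k → k + 3 ≤ n → ∀ q ∈ D,
      ∀ η ∈ annihilatorOn U (derivedFlag U (spanOn U {g1, g2}) k),
        lieDerOneForm f η q ∈
          retractOf (annihilatorOn U (derivedFlag U (spanOn U {g1, g2}) k)) q) :
    Gou n D (fun k => vals (derivedFlag U (spanOn U {g1, g2}) k)) f := by
  have hg : SmOn U {g1, g2} := by
    intro X hX x hx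
    rcases hX with rfl | rfl
    · exact hg1.contDiffAt (hU.mem_nhds hx)
    · exact hg2.contDiffAt (hU.mem_nhds hx)
  have hsm := fun k => SmOn.flag hU (hg.span hU) k
  have hrk : ∀ k, k + 2 ≤ n → ∀ q ∈ D,
      Module.finrank ℝ (vals (derivedFlag U (spanOn U {g1, g2}) k) q) = k + 2 := by
    intro k hk q hq
    rw [add_comm]; exact hdim k hk q hq
  have hrk' : ∀ k, k + 2 ≤ n → ∀ q ∈ D,
      ∀ᶠ x in 𝓝 q, Module.finrank ℝ (vals (derivedFlag U (spanOn U {g1, g2}) k) x) = k + 2 := by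
    intro k hk q hq
    filter_upwards [hDopen.mem_nhds hq] with x hx using hrk k hk x hx
  refine ⟨hDopen, by simp, fun x hx => hf.contDiffAt (hU.mem_nhds (hDsub hx)), hrk, ?_, ?_, ?_, ?_, ?_⟩
  · exact fun k hk q hq => vals_sec hU (hsm k) (hDsub hq)
  · intro k hk q hq
    apply Submodule.span_mono
    rintro _ ⟨X, hX, rfl⟩
    exact ⟨X, flag_mono _ k hX, rfl⟩
  · intro k hk q hq X Y hX hY
    obtain ⟨e, θ, heA, hfr⟩ := vals_frame hU (hsm k) (hDsub hq) (hrk' k (by omega) q hq)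
    refine bracket_mem_of_frame₂ hfr _ ?_ ?_ hX hY
    · apply Submodule.span_mono
      rintro _ ⟨X, hX, rfl⟩
      exact ⟨X, flag_mono _ k hX, rfl⟩
    · intro i j
      exact vals_mem (flag_brk _ k (heA i) (heA j)) q
  · intro k hk q hq
    by_contra! hcon
    have hle : vals (derivedFlag U (spanOn U {g1, g2}) (k + 1)) q ≤
        vals (derivedFlag U (spanOn U {g1, g2}) k) q := by
      rw [vals, Submodule.span_le]
      rintro _ ⟨X, ⟨Y, hY, Z, ⟨m, c, W, hc, hW, hZ⟩, hX⟩, rfl⟩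
      rw [hX q (hDsub hq), hZ q (hDsub hq)]
      refine Submodule.add_mem _ (vals_mem hY q) (Submodule.sum_mem _ fun i _ =>
        Submodule.smul_mem _ _ ?_)
      obtain ⟨X1, hX1, X2, hX2, hWi⟩ := hW i
      rw [hWi]
      exact hcon X1 X2 (vals_sec' hU (hsm k) hX1 (hDsub hq)) (vals_sec' hU (hsm k) hX2 (hDsub hq))
    have := Submodule.finrank_mono hle
    rw [hrk (k + 1) (by omega) q hq, hrk k (by omega) q hq] at this
    omega
  · intro k hk1 hk q hq X hX hXc
    have hqU := hDsub hq
    have hext := fun ξ hξ => ann_ext hU (hsm k) hqU (hrk' k (by omega) q hq) ξ hξ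
    have hann0 : ∀ η ∈ annihilatorOn U (derivedFlag U (spanOn U {g1, g2}) k), ∀ Y : VF n,
        Sec (vals (derivedFlag U (spanOn U {g1, g2}) k)) Y q → ∀ᶠ x in 𝓝 q, η x (Y x) = 0 := by
      intro η hη Y hY
      filter_upwards [hY, hU.mem_nhds hqU] with x h1 h2
      exact ann_vals hη h2 h1.2
    have hsw : ∀ η ∈ annihilatorOn U (derivedFlag U (spanOn U {g1, g2}) k), ContDiffAt ℝ ∞ η q :=
      fun η hη => hη.1.contDiffAt (hU.mem_nhds hqU)
    have hassoc : X q ∈ assocOf (annihilatorOn U (derivedFlag U (spanOn U {g1, g2}) k)) q := by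
      intro η hη
      refine ⟨(hann0 η hη X hX).self_of_nhds, ?_⟩
      apply Submodule.subset_span
      obtain ⟨ρ, hρ, hρq⟩ := hext (intExtDer η q (X q)) (by
        intro v hv
        obtain ⟨Y, hY, rfl⟩ := vals_sec hU (hsm k) hqU v hv
        have h1 := pair_deriv (hsw η hη) hX.self_of_nhds.1 (hann0 η hη X hX) (Y q)
        have h2 := pair_deriv (hsw η hη) hY.self_of_nhds.1 (hann0 η hη Y hY) (X q)
        have h3 := ann_vals hη hqU (hXc.self_of_nhds Y hY)
        simp only [VectorField.lieBracket, map_sub] at h3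
        simp only [intExtDer, ContinuousLinearMap.sub_apply, ContinuousLinearMap.flip_apply]
        linarith)
      exact ⟨ρ, hρ, hρq.symm⟩
    show VectorField.lieBracket ℝ f X q ∈ vals (derivedFlag U (spanOn U {g1, g2}) k) q
    rw [← Subspace.forall_mem_dualAnnihilator_apply_eq_zero_iff]
    intro φ hφ
    rw [Submodule.mem_dualAnnihilator] at hφ
    obtain ⟨ρ, hρ, hρq⟩ := hext (LinearMap.toContinuousLinearMap φ) hφ
    have h1 := hlie k hk1 hk q hq ρ hρ (X q) hassoc
    have h2 := pair_deriv (hsw ρ hρ) hX.self_of_nhds.1 (hann0 ρ hρ X hX) (f q)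
    simp only [lieDerOneForm, ContinuousLinearMap.add_apply, ContinuousLinearMap.comp_apply] at h1
    have h3 : ρ q (VectorField.lieBracket ℝ f X q) = 0 := by
      simp only [VectorField.lieBracket, map_sub]
      linarith
    rw [hρq] at h3
    exact h3

end Init

end

noncomputable section
open Set Filter Topology
open scoped ContDiff
set_option linter.unusedSectionVars false
set_option linter.deprecated false

section Final

theorem vals_pair {n : ℕ} {U : Set (Fin n → ℝ)} {g1 g2 : VF n} {x : Fin n → ℝ} (hx : x ∈ U) :
    vals (spanOn U {g1, g2}) x = Submodule.span ℝ {g1 x, g2 x} := by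
  apply le_antisymm
  · rw [vals, Submodule.span_le]
    rintro _ ⟨X, ⟨m, c, Y, hc, hY, hX⟩, rfl⟩
    rw [hX x hx]
    refine Submodule.sum_mem _ fun i _ => Submodule.smul_mem _ _ (Submodule.subset_span ?_)
    rcases hY i with h | h
    · left; rw [h]
    · right; rw [h]; rfl
  · rw [Submodule.span_le]
    have hin : ∀ g ∈ ({g1, g2} : Set (VF n)), g ∈ spanOn U {g1, g2} := fun g hg =>
      ⟨1, fun _ _ => 1, fun _ => g, fun _ => contDiffOn_const, fun _ => hg, fun x _ => by simp⟩
    rintro _ (rfl | rfl)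
    · exact vals_mem (hin g1 (by simp)) x
    · exact vals_mem (hin g2 (by simp)) x

theorem pair_indep {V : Type} [AddCommGroup V] [Module ℝ V] {a b : V}
    (h : Module.finrank ℝ (Submodule.span ℝ {a, b}) = 2) : a ≠ 0 ∧ ∀ r : ℝ, b ≠ r • a := by
  have key : ∀ c : V, ¬ (Submodule.span ℝ {a, b} ≤ Submodule.span ℝ {c}) := by
    intro c hle
    have h2 := Submodule.finrank_mono hle
    have h3 := finrank_span_le_card (R := ℝ) ({c} : Set V)
    simp at h3
    omega
  constructor
  · rintro rfl
    apply key b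
    rw [Submodule.span_le]
    rintro _ (rfl | rfl)
    · exact Submodule.zero_mem _
    · exact Submodule.mem_span_singleton_self _
  · rintro r rfl
    apply key a
    rw [Submodule.span_le]
    rintro _ (rfl | rfl)
    · exact Submodule.mem_span_singleton_self _
    · exact Submodule.smul_mem _ _ (Submodule.mem_span_singleton_self _)

theorem real_aux0 (A B C D δ : ℝ) (h0 : δ ≠ 0) (h : δ = A * D - C * B) :
    D / δ * (A / δ) - -B / δ * (-C / δ) = 1 / δ := by
  have : D / δ * (A / δ) - -B / δ * (-C / δ) = (A * D - C * B) / (δ * δ) := by ring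
  rw [this, ← h]; field_simp

theorem real_aux1 (A B C D tf zf δ v0 v1 : ℝ) (h0 : δ ≠ 0) (h : δ = A * D - C * B) :
    tf + ((-(D * tf - B * zf) / δ + D / δ * v0 + -B / δ * v1) * A +
      (-(A * zf - C * tf) / δ + -C / δ * v0 + A / δ * v1) * B) = v0 := by
  have : tf + ((-(D * tf - B * zf) / δ + D / δ * v0 + -B / δ * v1) * A +
      (-(A * zf - C * tf) / δ + -C / δ * v0 + A / δ * v1) * B) =
      tf + (v0 - tf) * ((A * D - C * B) / δ) := by ring
  rw [this, ← h, div_self h0]; ring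

theorem real_aux2 (A B C D tf zf δ v0 v1 : ℝ) (h0 : δ ≠ 0) (h : δ = A * D - C * B) :
    zf + ((-(D * tf - B * zf) / δ + D / δ * v0 + -B / δ * v1) * C +
      (-(A * zf - C * tf) / δ + -C / δ * v0 + A / δ * v1) * D) = v1 := by
  have : zf + ((-(D * tf - B * zf) / δ + D / δ * v0 + -B / δ * v1) * C +
      (-(A * zf - C * tf) / δ + -C / δ * v0 + A / δ * v1) * D) =
      zf + (v1 - zf) * ((A * D - C * B) / δ) := by ring
  rw [this, ← h, div_self h0]; ring

theorem tri_final {p : ℕ} {U O : Set (Fin (p + 2) → ℝ)} (hU : IsOpen U) (hO : IsOpen O) (hOU : O ⊆ U)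
    {f g1 g2 : VF (p + 2)}
    (hf : ContDiffOn ℝ (⊤ : ℕ∞) f U) (hg1 : ContDiffOn ℝ (⊤ : ℕ∞) g1 U)
    (hg2 : ContDiffOn ℝ (⊤ : ℕ∞) g2 U)
    (hr : ∀ x ∈ O, Module.finrank ℝ (vals (spanOn U {g1, g2}) x) = 2)
    (h : Tri (p + 2) O (vals (spanOn U {g1, g2})) f) :
    ∃ q ∈ O, IsTriangularizableAt (p + 2) U f g1 g2 q := by
  obtain ⟨q, hq, z, t, Φ, hev⟩ := h
  refine ⟨q, hq, ?_⟩
  set φ : VF (p + 2) := fun x j => if j.1 ≤ p then z j.1 x else t x with hφ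
  have hφz : ∀ j : Fin (p + 2), j.1 ≤ p → (fun x => φ x j) = z j.1 := by
    intro j hj; funext x; simp [hφ, hj]
  have hφt : ∀ j : Fin (p + 2), ¬ j.1 ≤ p → (fun x => φ x j) = t := by
    intro j hj; funext x; simp [hφ, hj]
  have hφs : ∀ᶠ x in 𝓝 q, ContDiffAt ℝ ∞ φ x := by
    filter_upwards [hev] with x hx
    rw [contDiffAt_pi]
    intro j
    by_cases hj : j.1 ≤ p
    · rw [hφz j hj]; exact hx.1 _ (by omega)
    · rw [hφt j hj]; exact hx.2.1
  have hcomp : ∀ x, ContDiffAt ℝ ∞ φ x → ∀ w j, fderiv ℝ φ x w j = fderiv ℝ (fun x => φ x j) x w := by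
    intro x hx w j
    have h2 : HasFDerivAt (fun u => φ u j) _ x :=
      (ContinuousLinearMap.proj (R := ℝ) (φ := fun _ : Fin (p + 2) => ℝ) j).hasFDerivAt.comp x
        (hx.differentiableAt (by simp)).hasFDerivAt
    rw [h2.fderiv]; rfl
  have hinj : Function.Injective (fderiv ℝ φ q) := by
    rw [injective_iff_map_eq_zero]
    intro w hw
    have hc := hcomp q hφs.self_of_nhds w
    rw [hw] at hc
    apply hev.self_of_nhds.2.2.1 w
    · intro j hj
      have := hc ⟨j, by omega⟩
      rw [hφz ⟨j, by omega⟩ (by simp; omega)] at this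
      exact this.symm
    · have := hc ⟨p + 1, by omega⟩
      rw [hφt ⟨p + 1, by omega⟩ (by simp)] at this
      exact this.symm
  let eφ : (Fin (p + 2) → ℝ) ≃L[ℝ] (Fin (p + 2) → ℝ) :=
    (LinearEquiv.ofInjectiveOfFinrankEq (fderiv ℝ φ q : (Fin (p + 2) → ℝ) →ₗ[ℝ] _) hinj
      rfl).toContinuousLinearEquiv
  have heφ : (eφ : (Fin (p + 2) → ℝ) →L[ℝ] (Fin (p + 2) → ℝ)) = fderiv ℝ φ q :=
    ContinuousLinearMap.ext fun w => rfl
  obtain ⟨κ, hk1, hkN, hk2, hk4, -, hk3⟩ := exists_smooth_inverse φ q _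
    (hev.and (hO.mem_nhds hq)) hφs eφ
    (by rw [heφ]; exact (hφs.self_of_nhds.differentiableAt (by simp)).hasFDerivAt)
  have hκφ : (κ : (Fin (p + 2) → ℝ) → (Fin (p + 2) → ℝ)) = φ := funext hk2
  have himg : φ '' κ.source = κ.target := by rw [← hκφ]; exact κ.image_source_eq_target
  have hxO : ∀ x ∈ κ.source, x ∈ O := fun x hx => (hkN hx).2
  have hfs : ∀ {X : VF (p + 2)}, ContDiffOn ℝ (⊤ : ℕ∞) X U → ∀ x ∈ κ.source, ContDiffAt ℝ ∞ X x :=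
    fun hX x hx => hX.contDiffAt (hU.mem_nhds (hOU (hxO x hx)))
  have hpair : ∀ x ∈ κ.source, ∀ T : (Fin (p + 2) → ℝ) → ℝ, ContDiffAt ℝ ∞ T x → ∀ {X : VF (p + 2)},
      ContDiffOn ℝ (⊤ : ℕ∞) X U → ContDiffAt ℝ ∞ (fun x => fderiv ℝ T x (X x)) x :=
    fun x hx T hT X hX => (hT.fderiv_right (m := ∞) (by simp)).clm_apply (hfs hX x hx)
  have hzs : ∀ x ∈ κ.source, ContDiffAt ℝ ∞ (z p) x := fun x hx => (hkN hx).1.1 p le_rfl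
  have hts : ∀ x ∈ κ.source, ContDiffAt ℝ ∞ t x := fun x hx => (hkN hx).1.2.1
  set A : (Fin (p + 2) → ℝ) → ℝ := fun x => fderiv ℝ t x (g1 x) with hA
  set B : (Fin (p + 2) → ℝ) → ℝ := fun x => fderiv ℝ t x (g2 x) with hB
  set C : (Fin (p + 2) → ℝ) → ℝ := fun x => fderiv ℝ (z p) x (g1 x) with hC
  set D : (Fin (p + 2) → ℝ) → ℝ := fun x => fderiv ℝ (z p) x (g2 x) with hD
  set tf : (Fin (p + 2) → ℝ) → ℝ := fun x => fderiv ℝ t x (f x) with htf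
  set zf : (Fin (p + 2) → ℝ) → ℝ := fun x => fderiv ℝ (z p) x (f x) with hzf
  set d : (Fin (p + 2) → ℝ) → ℝ := fun x => A x * D x - C x * B x with hd
  have hAs : ∀ x ∈ κ.source, ContDiffAt ℝ ∞ A x := fun x hx => hpair x hx t (hts x hx) hg1
  have hBs : ∀ x ∈ κ.source, ContDiffAt ℝ ∞ B x := fun x hx => hpair x hx t (hts x hx) hg2
  have hCs : ∀ x ∈ κ.source, ContDiffAt ℝ ∞ C x := fun x hx => hpair x hx (z p) (hzs x hx) hg1
  have hDs : ∀ x ∈ κ.source, ContDiffAt ℝ ∞ D x := fun x hx => hpair x hx (z p) (hzs x hx) hg2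
  have htfs : ∀ x ∈ κ.source, ContDiffAt ℝ ∞ tf x := fun x hx => hpair x hx t (hts x hx) hf
  have hzfs : ∀ x ∈ κ.source, ContDiffAt ℝ ∞ zf x := fun x hx => hpair x hx (z p) (hzs x hx) hf
  have hds : ∀ x ∈ κ.source, ContDiffAt ℝ ∞ d x := fun x hx =>
    ((hAs x hx).mul (hDs x hx)).sub ((hCs x hx).mul (hBs x hx))
  have hd0 : ∀ x ∈ κ.source, d x ≠ 0 := by
    intro x hx
    obtain ⟨⟨-, -, hker, heq⟩, hxO'⟩ := hkN hx
    have hvp := vals_pair (g1 := g1) (g2 := g2) (hOU hxO')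
    have hrx := hr x hxO'
    rw [hvp] at hrx
    obtain ⟨h1, h2⟩ := pair_indep hrx
    refine wronskian_ne (vals (spanOn U {g1, g2}) x) (fderiv ℝ (z p) x : (Fin (p + 2) → ℝ) →ₗ[ℝ] ℝ)
      (fderiv ℝ t x : (Fin (p + 2) → ℝ) →ₗ[ℝ] ℝ) ?_ ?_ ?_ h1 h2
    · intro w hw h1 h2
      apply hker w _ h2
      intro j hj
      rcases Nat.lt_or_ge j p with hjp | hjp
      · have e1 := (heq j (by omega)).2 w hw
        have e2 := (heq j (by omega)).2 0 (Submodule.zero_mem _)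
        have h2' : fderiv ℝ t x w = 0 := h2
        simp only [map_add, map_zero, h2'] at e1 e2
        linarith
      · have : j = p := by omega
        rw [this]; exact h1
    · rw [hvp]; exact Submodule.subset_span (by simp)
    · rw [hvp]; exact Submodule.subset_span (by simp)
  refine ⟨κ.source, κ.open_source, hk1, fun x hx => hOU (hxO x hx), φ, κ.symm,
    fun x hx => (hk4 x hx).contDiffWithinAt, by rw [himg]; exact κ.open_target,
    by rw [himg]; exact fun y hy => (hk3 y hy).contDiffWithinAt,
    fun x hx => by rw [← hk2]; exact κ.left_inv hx,
    fun x => ![-(D x * tf x - B x * zf x) / d x, -(A x * zf x - C x * tf x) / d x],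
    fun x => ![![D x / d x, -B x / d x], ![-C x / d x, A x / d x]], ?_, ?_, ?_, 
    fun i y => if hi : i + 3 ≤ p + 2 then Φ i (fun k => y ⟨k.1, by omega⟩, y ⟨p + 1, by omega⟩) else 0,
    ?_, ?_, ?_⟩
  · intro i x hx
    apply ContDiffAt.contDiffWithinAt
    fin_cases i
    · exact (((hDs x hx).mul (htfs x hx)).sub ((hBs x hx).mul (hzfs x hx))).neg.div (hds x hx) (hd0 x hx)
    · exact (((hAs x hx).mul (hzfs x hx)).sub ((hCs x hx).mul (htfs x hx))).neg.div (hds x hx) (hd0 x hx)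
  · intro i j x hx
    apply ContDiffAt.contDiffWithinAt
    fin_cases i <;> fin_cases j
    · exact (hDs x hx).div (hds x hx) (hd0 x hx)
    · exact (hBs x hx).neg.div (hds x hx) (hd0 x hx)
    · exact (hCs x hx).neg.div (hds x hx) (hd0 x hx)
    · exact (hAs x hx).div (hds x hx) (hd0 x hx)
  · intro x hx
    have h0 := hd0 x hx
    have e : D x / d x * (A x / d x) - -B x / d x * (-C x / d x) = 1 / d x := by
      exact real_aux0 (A x) (B x) (C x) (D x) (d x) h0 rfl
    change D x / d x * (A x / d x) - -B x / d x * (-C x / d x) ≠ 0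
    rw [e]
    exact one_div_ne_zero h0
  · rintro i hi _ ⟨x, hx, rfl⟩
    apply ContDiffAt.contDiffWithinAt
    simp only [dif_pos hi]
    have h1 := ((hkN hx).1.2.2.2 i hi).1
    let L : (Fin (p + 2) → ℝ) → (Fin (i + 2) → ℝ) × ℝ :=
      fun y => (fun k => y ⟨k.1, by omega⟩, y ⟨p + 1, by omega⟩)
    have hL : ContDiffAt ℝ ∞ L (φ x) := by
      refine ContDiffAt.prodMk ?_ (contDiffAt_pi.1 contDiffAt_id _)
      rw [contDiffAt_pi]
      exact fun k => contDiffAt_pi.1 contDiffAt_id _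
    have hLx : L (φ x) = (fun k : Fin (i + 2) => z k x, t x) := by
      refine Prod.ext ?_ ?_
      · funext k
        have : k.1 ≤ p := by omega
        simp [L, hφ, this]
      · simp [L, hφ]
    rw [← hLx] at h1
    exact ContDiffAt.comp (φ x) h1 hL
  · intro i hi y y' hy
    simp only [dif_pos hi]
    congr 1
    refine Prod.ext ?_ ?_
    · funext k
      exact hy _ (Or.inl (by simp; omega))
    · exact hy _ (Or.inr rfl)
  · intro x hx v
    obtain ⟨⟨-, -, hker, heq⟩, hxO'⟩ := hkN hx
    have hvp := vals_pair (g1 := g1) (g2 := g2) (hOU hxO')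
    have h0 := hd0 x hx
    simp only [Matrix.cons_val_zero, Matrix.cons_val_one]
    generalize hu0 : -(D x * tf x - B x * zf x) / d x + D x / d x * v 0 + -B x / d x * v 1 = u0
    generalize hu1 : -(A x * zf x - C x * tf x) / d x + -C x / d x * v 0 + A x / d x * v 1 = u1
    have hw : u0 • g1 x + u1 • g2 x ∈ vals (spanOn U {g1, g2}) x := by
      rw [hvp]
      exact Submodule.add_mem _ (Submodule.smul_mem _ _ (Submodule.subset_span (by simp)))
        (Submodule.smul_mem _ _ (Submodule.subset_span (by simp)))
    have h1 : fderiv ℝ t x (f x + (u0 • g1 x + u1 • g2 x)) = v 0 := by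
      simp only [map_add, map_smul, smul_eq_mul]
      change tf x + (u0 * A x + u1 * B x) = v 0
      rw [← hu0, ← hu1]
      exact real_aux1 (A x) (B x) (C x) (D x) (tf x) (zf x) (d x) (v 0) (v 1) h0 rfl
    have h2 : fderiv ℝ (z p) x (f x + (u0 • g1 x + u1 • g2 x)) = v 1 := by
      simp only [map_add, map_smul, smul_eq_mul]
      change zf x + (u0 * C x + u1 * D x) = v 1
      rw [← hu0, ← hu1]
      exact real_aux2 (A x) (B x) (C x) (D x) (tf x) (zf x) (d x) (v 0) (v 1) h0 rfl
    rw [add_assoc]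
    funext j
    rw [hcomp x (hk4 x hx)]
    simp only [triRHS]
    by_cases hj : j.1 + 3 ≤ p + 2
    · rw [dif_pos hj, dif_pos hj, hφz j (by omega), (heq j.1 hj).2 _ hw, h1]
      have e1 : φ x ⟨j.1 + 1, by omega⟩ = z (j.1 + 1) x := by
        have : j.1 + 1 ≤ p := by omega
        simp [hφ, this]
      have e2 : φ x ⟨p + 1, by omega⟩ = t x := by simp [hφ]
      have e3 : (fun k : Fin (j.1 + 2) => φ x ⟨k.1, by omega⟩) = fun k : Fin (j.1 + 2) => z k x := by
        funext k
        have : k.1 ≤ p := by omega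
        simp [hφ, this]
      rw [e1, e2, e3]
    · rw [dif_neg hj]
      by_cases hj2 : j.1 + 2 = p + 2
      · rw [if_pos hj2, hφz j (by omega), show j.1 = p by omega, h2]
      · rw [if_neg hj2, hφt j (by omega), h1]

end Final

theorem main_theorem_generic_aux {n : ℕ} (hn : 2 ≤ n) (U : Set (Fin n → ℝ)) (hU : IsOpen U)
    (f g1 g2 : VF n)
    (hf : ContDiffOn ℝ (⊤ : ℕ∞) f U) (hg1 : ContDiffOn ℝ (⊤ : ℕ∞) g1 U) (hg2 : ContDiffOn ℝ (⊤ : ℕ∞) g2 U)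
    (D : Set (Fin n → ℝ)) (hDopen : IsOpen D) (hDsub : D ⊆ U) (hDdense : U ⊆ closure D)
    (hdim : ∀ k : ℕ, k + 2 ≤ n → ∀ q ∈ D,
      evalDim (derivedFlag U (spanOn U {g1, g2}) k) q = 2 + k)
    (hlie : ∀ k : ℕ, 1 ≤ k → k + 3 ≤ n → ∀ q ∈ D,
      ∀ η ∈ annihilatorOn U (derivedFlag U (spanOn U {g1, g2}) k),
        lieDerOneForm f η q ∈
          retractOf (annihilatorOn U (derivedFlag U (spanOn U {g1, g2}) k)) q) :
    ∃ V : Set (Fin n → ℝ), IsOpen V ∧ V ⊆ U ∧ U ⊆ closure V ∧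
      ∀ p ∈ V, IsTriangularizableAt n U f g1 g2 p := by
  obtain ⟨p, rfl⟩ : ∃ p, n = p + 2 := ⟨n - 2, by omega⟩
  have hG := init_gou hU hf hg1 hg2 hDopen hDsub hdim hlie
  refine ⟨{x | x ∈ U ∧ IsTriangularizableAt (p + 2) U f g1 g2 x}, ?_, fun x hx => hx.1, ?_,
    fun x hx => hx.2⟩
  · rw [isOpen_iff_mem_nhds]
    rintro x ⟨hx, V, hV, hxV, hVU, hrest⟩
    filter_upwards [hV.mem_nhds hxV] with y hy
    exact ⟨hVU hy, V, hV, hy, hVU, hrest⟩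
  · intro x hx
    rw [mem_closure_iff]
    intro O hO hxO
    obtain ⟨y, hyO, hyD⟩ := mem_closure_iff.1 (hDdense hx) O hO hxO
    have hOD : IsOpen (O ∩ D) := hO.inter hDopen
    have h1 := (hG.restrict hOD inter_subset_right).tri p ⟨y, hyO, hyD⟩
    obtain ⟨q, hq, hqt⟩ := tri_final hU hOD (fun u hu => hDsub hu.2) hf hg1 hg2
      (fun u hu => hG.rank 0 (by omega) u hu.2) h1
    exact ⟨q, hq.1, hDsub hq.2, hqt⟩

end

noncomputable section

/-- **generic corollary of the main theorem.** If there is an open set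
`D ⊆ U`, dense in `U`, on which `dim G_k(q) = 2 + k` (`0 ≤ k ≤ n−2`) and
`(L_f ω)(q) ∈ Cᵏ_q` for all `1 ≤ k ≤ n−3` and `ω ∈ Λᵏ = (G_k)^⊥`, then there is an open
set `V ⊆ U`, dense in `U`, such that near every `p ∈ V` the system is transformable
into the triangular form (3) by a local change of coordinates and a regular static
state feedback. -/
theorem main_theorem_generic {n : ℕ} (hn : 2 ≤ n) (U : Set (Fin n → ℝ)) (hU : IsOpen U)
    (f g1 g2 : VF n)
    (hf : ContDiffOn ℝ (⊤ : ℕ∞) f U) (hg1 : ContDiffOn ℝ (⊤ : ℕ∞) g1 U) (hg2 : ContDiffOn ℝ (⊤ : ℕ∞) g2 U)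
    (D : Set (Fin n → ℝ)) (hDopen : IsOpen D) (hDsub : D ⊆ U) (hDdense : U ⊆ closure D)
    (hdim : ∀ k : ℕ, k + 2 ≤ n → ∀ q ∈ D,
      evalDim (derivedFlag U (spanOn U {g1, g2}) k) q = 2 + k)
    (hlie : ∀ k : ℕ, 1 ≤ k → k + 3 ≤ n → ∀ q ∈ D,
      ∀ ω ∈ annihilatorOn U (derivedFlag U (spanOn U {g1, g2}) k),
        lieDerOneForm f ω q ∈
          retractOf (annihilatorOn U (derivedFlag U (spanOn U {g1, g2}) k)) q) :
    ∃ V : Set (Fin n → ℝ), IsOpen V ∧ V ⊆ U ∧ U ⊆ closure V ∧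
      ∀ p ∈ V, IsTriangularizableAt n U f g1 g2 p := by
  exact main_theorem_generic_aux hn U hU f g1 g2 hf hg1 hg2 D hDopen hDsub hDdense hdim hlie

end
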